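/- arXiv:2412.16004 — 2 statements merged into one kernel-verified Lean document; each statement's English description precedes it below -/
import Mathlib

section
/- Let n ≥ 2 and R a commutative ring with invertible element q^{1/n}, q := (q^{1/n})^n. In the common underlying R-module of O_q(M_n) and B_q(M_n), for every integer N ≥ 1 and all 1 ≤ k, l ≤ n: (x^k_k)^N x^k_l = ((x^k_k)^N) ⬝ x^k_l + (1 − q^{−2N}) Σ_{β=1}^{k−1} ((x^k_k)^{N−1} x^k_β) ⬝ x^β_l, where powers and juxtaposed products are taken with the original product of O_q(M_n) and ⬝ is the covariantized product. -/
open scoped TensorProduct BigOperators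

noncomputable section

universe u

/-- Integer power `q^m` of an invertible element `qq` of `R`, as an element of `R`. -/
def qzpow {R : Type u} [CommRing R] (qq : Rˣ) (m : ℤ) : R := ((qq ^ m : Rˣ) : R)

/-- The defining relations of the `q`-matrix bialgebra `O_q(M_n)` for a family
`y i j` (the image of the generator `x^i_j`; the first index is the upper one). -/
def OqMnRels {R : Type u} [CommRing R] {B : Type u} [Ring B] [Algebra R B]
    (n : ℕ) (qq : Rˣ) (y : Fin n → Fin n → B) : Prop :=
  (∀ i j k : Fin n, j < k → y i k * y i j = (qq : R) • (y i j * y i k)) ∧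
  (∀ i j k : Fin n, j < k → y k i * y j i = (qq : R) • (y j i * y k i)) ∧
  (∀ i j k l : Fin n, i < j → k < l → y i l * y j k = y j k * y i l) ∧
  (∀ i j k l : Fin n, i < j → k < l →
    y j l * y i k - y i k * y j l = ((qq : R) - ((qq⁻¹ : Rˣ) : R)) • (y i l * y j k))

/-- `ρ` is a dual quasitriangular structure on the bialgebra `A`.  All conditions
involving the Sweedler components of the comultiplication are expressed by
quantifying over finite representations of `comul`. -/
def IsDQT {R : Type u} [CommRing R] {A : Type u} [Ring A] [Bialgebra R A]
    (ρ : A →ₗ[R] A →ₗ[R] R) : Prop :=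
  (∀ (a b c : A) (s : Finset ℕ) (c1 c2 : ℕ → A),
      Coalgebra.comul (R := R) c = ∑ i ∈ s, c1 i ⊗ₜ[R] c2 i →
      ρ (a * b) c = ∑ i ∈ s, ρ a (c1 i) * ρ b (c2 i)) ∧
  (∀ (a b c : A) (s : Finset ℕ) (a1 a2 : ℕ → A),
      Coalgebra.comul (R := R) a = ∑ i ∈ s, a1 i ⊗ₜ[R] a2 i →
      ρ a (b * c) = ∑ i ∈ s, ρ (a1 i) c * ρ (a2 i) b) ∧
  (∀ a : A, ρ a 1 = Coalgebra.counit (R := R) a) ∧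
  (∀ a : A, ρ 1 a = Coalgebra.counit (R := R) a) ∧
  (∀ (a b : A) (s t : Finset ℕ) (a1 a2 b1 b2 : ℕ → A),
      Coalgebra.comul (R := R) a = ∑ i ∈ s, a1 i ⊗ₜ[R] a2 i →
      Coalgebra.comul (R := R) b = ∑ j ∈ t, b1 j ⊗ₜ[R] b2 j →
      ∑ i ∈ s, ∑ j ∈ t, ρ (a2 i) (b2 j) • (b1 j * a1 i) =
        ∑ i ∈ s, ∑ j ∈ t, ρ (a1 i) (b1 j) • (a2 i * b2 j))

/-- `ρt` is the convolution inverse of `ρ` in `Hom(A ⊗ A^cop, R)`. -/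
def IsCopConvInv {R : Type u} [CommRing R] {A : Type u} [Ring A] [Bialgebra R A]
    (ρ ρt : A →ₗ[R] A →ₗ[R] R) : Prop :=
  ∀ (a b : A) (s t : Finset ℕ) (a1 a2 b1 b2 : ℕ → A),
    Coalgebra.comul (R := R) a = ∑ i ∈ s, a1 i ⊗ₜ[R] a2 i →
    Coalgebra.comul (R := R) b = ∑ j ∈ t, b1 j ⊗ₜ[R] b2 j →
    (∑ i ∈ s, ∑ j ∈ t, ρt (a1 i) (b2 j) * ρ (a2 i) (b1 j)
        = Coalgebra.counit (R := R) a * Coalgebra.counit (R := R) b) ∧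
    (∑ i ∈ s, ∑ j ∈ t, ρ (a1 i) (b2 j) * ρt (a2 i) (b1 j)
        = Coalgebra.counit (R := R) a * Coalgebra.counit (R := R) b)

/-- The twofold comultiplication `a ↦ a₍₁₎ ⊗ (a₍₂₎ ⊗ a₍₃₎)`. -/
def comul2 {R : Type u} [CommRing R] {A : Type u} [Ring A] [Bialgebra R A] :
    A →ₗ[R] A ⊗[R] (A ⊗[R] A) :=
  (TensorProduct.map LinearMap.id (Coalgebra.comul (R := R))).comp (Coalgebra.comul (R := R))

/-- `cmul` is the covariantized (reflection equation) product
`a ⬝ b = a₍₂₎ b₍₃₎ 𝓡̃(a₍₃₎, b₍₁₎) 𝓡(a₍₁₎, b₍₂₎)` built from `ρ` and its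
convolution inverse `ρt` in `Hom(A ⊗ A^cop, R)`, expressed via finite
representations of the iterated comultiplication. -/
def CovChar {R : Type u} [CommRing R] {A : Type u} [Ring A] [Bialgebra R A]
    (ρ ρt : A →ₗ[R] A →ₗ[R] R) (cmul : A → A → A) : Prop :=
  ∀ (a b : A) (s t : Finset ℕ) (a1 a2 a3 b1 b2 b3 : ℕ → A),
    comul2 (R := R) a = ∑ i ∈ s, a1 i ⊗ₜ[R] (a2 i ⊗ₜ[R] a3 i) →
    comul2 (R := R) b = ∑ j ∈ t, b1 j ⊗ₜ[R] (b2 j ⊗ₜ[R] b3 j) →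
    cmul a b = ∑ i ∈ s, ∑ j ∈ t, (ρt (a3 i) (b1 j) * ρ (a1 i) (b2 j)) • (a2 i * b3 j)

/-- The value `𝓡(x^i_j, x^k_l)` of the standard dual quasitriangular structure of
`O_q(M_n)`, where `qr = q^{1/n}` is the chosen `n`-th root of `q = qr^n`:
`𝓡(x^i_j, x^k_l) = q^{−1/n} (δ^i_j δ^k_l q^{δ^j_l} + (q − q^{−1}) δ_{j>l} δ^i_l δ^k_j)`. -/
def RmatVal {R : Type u} [CommRing R] (n : ℕ) (qr : Rˣ) (i j k l : Fin n) : R :=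
  ((qr⁻¹ : Rˣ) : R) *
    ((if i = j then 1 else 0) * (if k = l then 1 else 0) *
        (if j = l then ((qr ^ n : Rˣ) : R) else 1)
      + (((qr ^ n : Rˣ) : R) - (((qr ^ n)⁻¹ : Rˣ) : R)) * (if l < j then 1 else 0) *
          (if i = l then 1 else 0) * (if k = j then 1 else 0))

/-- Product of a nonempty list under a binary operation, bracketed to the right. -/
def cchain {A : Type u} (cmul : A → A → A) : A → List A → A
  | a, [] => a
  | a, b :: l => cmul a (cchain cmul b l)

/-- Product of a list under the binary operation `cmul`, equal to `one` on the empty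
list (and not otherwise using `one`). -/
def cListProd {A : Type u} (cmul : A → A → A) (one : A) : List A → A
  | [] => one
  | a :: l => cchain cmul a l

/-- `N`-th power with respect to the binary operation `cmul`. -/
def cpow {A : Type u} (cmul : A → A → A) (one : A) (a : A) (N : ℕ) : A :=
  cListProd cmul one (List.replicate N a)

/-- A family `y` indexed by a finite type spans a matrix coalgebra: `Δ(y i j) = ∑ k, y i k ⊗ y k j`
and `ε(y i j) = δ i j`. -/
def IsMatrixFamily (R : Type u) [CommRing R] {A : Type u} [Ring A] [Bialgebra R A]
    {S : Type} [Fintype S] [DecidableEq S] (y : S → S → A) : Prop :=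
  (∀ i j, Coalgebra.comul (R := R) (y i j) = ∑ k, y i k ⊗ₜ[R] y k j) ∧
  (∀ i j, Coalgebra.counit (R := R) (y i j) = if i = j then (1 : R) else 0)

/-- The family of products of the entries of two families. -/
def mulFamily {A : Type u} [Ring A] {S S' : Type} (y : S → S → A) (z : S' → S' → A) :
    S × S' → S × S' → A :=
  fun i j => y i.1 j.1 * z i.2 j.2

/-- The matrix `(ρ(a, x^p_m))_{p, m}`. -/
def pairMatrix {R : Type u} [CommRing R] {A : Type u} [Ring A] [Bialgebra R A] {n : ℕ}
    (ρ : A →ₗ[R] A →ₗ[R] R) (x : Fin n → Fin n → A) (a : A) : Matrix (Fin n) (Fin n) R :=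
  Matrix.of fun p m => ρ a (x p m)

/-- The coefficients of `y i j ⬝ x^r_l` with respect to right multiplication by `x^m_l`. -/
def covCoeff {R : Type u} [CommRing R] {A : Type u} [Ring A] [Bialgebra R A] {n : ℕ}
    (ρ ρt : A →ₗ[R] A →ₗ[R] R) (x : Fin n → Fin n → A) {S : Type} [Fintype S]
    (y : S → S → A) (i j : S) (r m : Fin n) : A :=
  ∑ s, ∑ t, (pairMatrix ρt x (y t j) * pairMatrix ρ x (y i s)) r m • y s t

section MatrixFamilies

variable {R : Type u} [CommRing R] {A : Type u} [Ring A] [Bialgebra R A]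
variable {S S' : Type} [Fintype S] [DecidableEq S] [Fintype S'] [DecidableEq S']
variable {n : ℕ} {ρ ρt : A →ₗ[R] A →ₗ[R] R} {x : Fin n → Fin n → A}
variable {y : S → S → A} {z : S' → S' → A}

lemma exists_embedding_nat (ι : Type) [Finite ι] : ∃ e : ι → ℕ, Function.Injective e := by
  obtain ⟨m, ⟨f⟩⟩ := Finite.exists_equiv_fin ι
  exact ⟨fun i => f i, Fin.val_injective.comp f.injective⟩

lemma IsMatrixFamily.mul (hy : IsMatrixFamily R y) (hz : IsMatrixFamily R z) :
    IsMatrixFamily R (mulFamily y z) := by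
  refine ⟨fun i j => ?_, fun i j => ?_⟩
  · simp only [mulFamily, Bialgebra.comul_mul, hy.1, hz.1, Finset.sum_mul_sum,
      Algebra.TensorProduct.tmul_mul_tmul, Fintype.sum_prod_type]
  · simp only [mulFamily, Bialgebra.counit_mul, hy.2, hz.2, Prod.ext_iff]
    split_ifs <;> simp_all

lemma isMatrixFamily_one : IsMatrixFamily R (fun _ _ : Unit => (1 : A)) := by
  refine ⟨fun i j => ?_, fun i j => ?_⟩
  · simp [Algebra.TensorProduct.one_def]
  · simp

lemma IsMatrixFamily.comul2 (hy : IsMatrixFamily R y) (i j : S) :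
    _root_.comul2 (R := R) (y i j) =
      ∑ p : S × S, y i p.1 ⊗ₜ[R] (y p.1 p.2 ⊗ₜ[R] y p.2 j) := by
  simp only [_root_.comul2, LinearMap.comp_apply, hy.1, map_sum, TensorProduct.map_tmul,
    LinearMap.id_apply, TensorProduct.tmul_sum, Fintype.sum_prod_type]

lemma IsDQT.mul_left_apply (hρ : IsDQT ρ) (hz : IsMatrixFamily R z) (a b : A) (i j : S') :
    ρ (a * b) (z i j) = ∑ k, ρ a (z i k) * ρ b (z k j) := by
  obtain ⟨e, he⟩ := exists_embedding_nat S'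
  have h := hρ.1 a b (z i j) (Finset.univ.map ⟨e, he⟩) (Function.extend e (fun k => z i k) 0)
    (Function.extend e (fun k => z k j) 0)
  simp only [Finset.sum_map, Function.Embedding.coeFn_mk, he.extend_apply] at h
  exact h (hz.1 i j)

lemma IsCopConvInv.sum_apply (hρt : IsCopConvInv ρ ρt) (hy : IsMatrixFamily R y)
    (hz : IsMatrixFamily R z) (i j : S) (k l : S') :
    (∑ s, ∑ p, ρt (y i s) (z p l) * ρ (y s j) (z k p)
        = (if i = j then 1 else 0) * (if k = l then 1 else 0)) ∧
    (∑ s, ∑ p, ρ (y i s) (z p l) * ρt (y s j) (z k p)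
        = (if i = j then 1 else 0) * (if k = l then 1 else 0)) := by
  obtain ⟨e, he⟩ := exists_embedding_nat S
  obtain ⟨e', he'⟩ := exists_embedding_nat S'
  have h := hρt (y i j) (z k l) (Finset.univ.map ⟨e, he⟩) (Finset.univ.map ⟨e', he'⟩)
    (Function.extend e (fun s => y i s) 0) (Function.extend e (fun s => y s j) 0)
    (Function.extend e' (fun p => z k p) 0) (Function.extend e' (fun p => z p l) 0)
  simp only [Finset.sum_map, Function.Embedding.coeFn_mk, he.extend_apply, he'.extend_apply,
    hy.2, hz.2] at h
  exact h (hy.1 i j) (hz.1 k l)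

lemma CovChar.apply {cmul : A → A → A} (hcmul : CovChar ρ ρt cmul) (hy : IsMatrixFamily R y)
    (hz : IsMatrixFamily R z) (i j : S) (k l : S') :
    cmul (y i j) (z k l) = ∑ s : S × S, ∑ p : S' × S',
      (ρt (y s.2 j) (z k p.1) * ρ (y i s.1) (z p.1 p.2)) • (y s.1 s.2 * z p.2 l) := by
  obtain ⟨e, he⟩ := exists_embedding_nat (S × S)
  obtain ⟨e', he'⟩ := exists_embedding_nat (S' × S')
  have h := hcmul (y i j) (z k l) (Finset.univ.map ⟨e, he⟩) (Finset.univ.map ⟨e', he'⟩)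
    (Function.extend e (fun s => y i s.1) 0) (Function.extend e (fun s => y s.1 s.2) 0)
    (Function.extend e (fun s => y s.2 j) 0)
    (Function.extend e' (fun p => z k p.1) 0) (Function.extend e' (fun p => z p.1 p.2) 0)
    (Function.extend e' (fun p => z p.2 l) 0)
  simp only [Finset.sum_map, Function.Embedding.coeFn_mk, he.extend_apply, he'.extend_apply] at h
  exact h (hy.comul2 i j) (hz.comul2 k l)

/-- The covariantized product with a generator, in terms of `covCoeff`. -/
lemma CovChar.apply_eq_sum_covCoeff {cmul : A → A → A} (hcmul : CovChar ρ ρt cmul)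
    (hy : IsMatrixFamily R y) (hx : IsMatrixFamily R x) (i j : S) (r l : Fin n) :
    cmul (y i j) (x r l) = ∑ m, covCoeff ρ ρt x y i j r m * x m l := by
  rw [hcmul.apply hy hx]
  simp only [covCoeff, Fintype.sum_prod_type, Matrix.mul_apply, pairMatrix, Matrix.of_apply,
    Finset.sum_smul, Finset.sum_mul, smul_mul_assoc]
  conv_rhs => rw [Finset.sum_comm]
  refine Finset.sum_congr rfl fun s _ => ?_
  conv_rhs => rw [Finset.sum_comm]
  refine Finset.sum_congr rfl fun t _ => ?_
  rw [Finset.sum_comm]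

lemma IsDQT.pairMatrix_mul (hρ : IsDQT ρ) (hx : IsMatrixFamily R x) (a b : A) :
    pairMatrix ρ x (a * b) = pairMatrix ρ x a * pairMatrix ρ x b := by
  ext p m
  simp [pairMatrix, Matrix.mul_apply, hρ.mul_left_apply hx]

lemma IsCopConvInv.sum_pairMatrix_mul (hρt : IsCopConvInv ρ ρt) (hy : IsMatrixFamily R y)
    (hx : IsMatrixFamily R x) (i j : S) :
    ∑ s, pairMatrix ρ x (y s j) * pairMatrix ρt x (y i s) = if i = j then 1 else 0 := by
  ext k l
  have h := (hρt.sum_apply hy hx i j k l).1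
  simp only [Matrix.sum_apply, Matrix.mul_apply, pairMatrix, Matrix.of_apply]
  simp only [mul_comm (ρ _ _)]
  rw [h]
  split_ifs with h1 h2 <;> simp_all [Matrix.one_apply]

lemma IsCopConvInv.sum_pairMatrix_mul' (hρt : IsCopConvInv ρ ρt) (hy : IsMatrixFamily R y)
    (hx : IsMatrixFamily R x) (i j : S) :
    ∑ s, pairMatrix ρt x (y s j) * pairMatrix ρ x (y i s) = if i = j then 1 else 0 := by
  ext k l
  have h := (hρt.sum_apply hy hx i j k l).2
  simp only [Matrix.sum_apply, Matrix.mul_apply, pairMatrix, Matrix.of_apply]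
  simp only [mul_comm (ρt _ _)]
  rw [h]
  split_ifs with h1 h2 <;> simp_all [Matrix.one_apply]

/-- Uniqueness of the inverse of the matrix family `pairMatrix ρ x (y i j)`. -/
lemma IsCopConvInv.pairMatrix_eq (hρt : IsCopConvInv ρ ρt) (hy : IsMatrixFamily R y)
    (hx : IsMatrixFamily R x) (U : S → S → Matrix (Fin n) (Fin n) R)
    (hU : ∀ i j, ∑ s, pairMatrix ρ x (y s j) * U i s = if i = j then 1 else 0) (i j : S) :
    pairMatrix ρt x (y i j) = U i j := by
  calc pairMatrix ρt x (y i j)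
      = ∑ s, pairMatrix ρt x (y s j) * (if i = s then 1 else 0) := by simp
    _ = ∑ s, ∑ t, pairMatrix ρt x (y s j) * (pairMatrix ρ x (y t s) * U i t) := by
        simp only [← hU, Finset.mul_sum]
    _ = ∑ t, (∑ s, pairMatrix ρt x (y s j) * pairMatrix ρ x (y t s)) * U i t := by
        rw [Finset.sum_comm]
        simp only [Finset.sum_mul, mul_assoc]
    _ = U i j := by simp [hρt.sum_pairMatrix_mul' hy hx]

/-- The inverse `ρt` is anti-multiplicative in its first argument. -/
lemma IsCopConvInv.pairMatrix_mul (hρ : IsDQT ρ) (hρt : IsCopConvInv ρ ρt)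
    (hy : IsMatrixFamily R y) (hz : IsMatrixFamily R z) (hx : IsMatrixFamily R x)
    (i j : S × S') :
    pairMatrix ρt x (mulFamily y z i j) =
      pairMatrix ρt x (z i.2 j.2) * pairMatrix ρt x (y i.1 j.1) := by
  refine hρt.pairMatrix_eq (hy.mul hz) hx
    (fun i j => pairMatrix ρt x (z i.2 j.2) * pairMatrix ρt x (y i.1 j.1)) (fun i j => ?_) i j
  calc ∑ s, pairMatrix ρ x (mulFamily y z s j) *
        (pairMatrix ρt x (z i.2 s.2) * pairMatrix ρt x (y i.1 s.1))
      = ∑ s, pairMatrix ρ x (y s j.1) *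
          (∑ s', pairMatrix ρ x (z s' j.2) * pairMatrix ρt x (z i.2 s')) *
          pairMatrix ρt x (y i.1 s) := by
        simp only [mulFamily, hρ.pairMatrix_mul hx, Fintype.sum_prod_type, Finset.mul_sum,
          Finset.sum_mul, mul_assoc]
    _ = if i = j then 1 else 0 := by
        simp only [hρt.sum_pairMatrix_mul hz hx, Prod.ext_iff]
        by_cases h : i.2 = j.2
        · simp [h, hρt.sum_pairMatrix_mul hy hx]
        · simp [h]

lemma covCoeff_mulFamily (hρ : IsDQT ρ) (hρt : IsCopConvInv ρ ρt)
    (hy : IsMatrixFamily R y) (hz : IsMatrixFamily R z) (hx : IsMatrixFamily R x)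
    (i j : S × S') (r m : Fin n) :
    covCoeff ρ ρt x (mulFamily y z) i j r m =
      ∑ t', ∑ p, ρt (z t' j.2) (x r p) • ∑ s', ∑ p', ρ (z i.2 s') (x p' m) •
        (covCoeff ρ ρt x y i.1 j.1 p p' * z s' t') := by
  have key : ∀ s t : S × S',
      (pairMatrix ρt x (mulFamily y z t j) * pairMatrix ρ x (mulFamily y z i s)) r m =
      ∑ p, ∑ p', ρt (z t.2 j.2) (x r p) * (ρ (z i.2 s.2) (x p' m) *
        (pairMatrix ρt x (y t.1 j.1) * pairMatrix ρ x (y i.1 s.1)) p p') := by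
    intro s t
    rw [hρt.pairMatrix_mul hρ hy hz hx, mulFamily, hρ.pairMatrix_mul hx, mul_assoc,
      Matrix.mul_apply]
    refine Finset.sum_congr rfl fun p _ => ?_
    rw [← mul_assoc, Matrix.mul_apply, Finset.mul_sum]
    refine Finset.sum_congr rfl fun p' _ => ?_
    simp only [pairMatrix, Matrix.of_apply]
    ring
  have hL : covCoeff ρ ρt x (mulFamily y z) i j r m =
      ∑ a : (S × S') × (S × S') × Fin n × Fin n,
        (ρt (z a.2.1.2 j.2) (x r a.2.2.1) * (ρ (z i.2 a.1.2) (x a.2.2.2 m) *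
        (pairMatrix ρt x (y a.2.1.1 j.1) * pairMatrix ρ x (y i.1 a.1.1)) a.2.2.1 a.2.2.2)) •
          (y a.1.1 a.2.1.1 * z a.1.2 a.2.1.2) := by
    rw [covCoeff]
    simp only [key, Finset.sum_smul]
    simp only [mulFamily, Fintype.sum_prod_type]
  have hR : (∑ t', ∑ p, ρt (z t' j.2) (x r p) • ∑ s', ∑ p', ρ (z i.2 s') (x p' m) •
        (covCoeff ρ ρt x y i.1 j.1 p p' * z s' t')) =
      ∑ a : S' × Fin n × S' × Fin n × S × S,
        (ρt (z a.1 j.2) (x r a.2.1) * (ρ (z i.2 a.2.2.1) (x a.2.2.2.1 m) *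
        (pairMatrix ρt x (y a.2.2.2.2.2 j.1) * pairMatrix ρ x (y i.1 a.2.2.2.2.1))
          a.2.1 a.2.2.2.1)) •
          (y a.2.2.2.2.1 a.2.2.2.2.2 * z a.2.2.1 a.1) := by
    simp only [covCoeff, Finset.sum_mul, Finset.smul_sum, smul_mul_assoc, smul_smul,
      Fintype.sum_prod_type]
  rw [hL, hR]
  exact Fintype.sum_equiv
    ⟨fun a => (a.2.1.2, a.2.2.1, a.1.2, a.2.2.2, a.1.1, a.2.1.1),
      fun b => ((b.2.2.2.2.1, b.2.2.1), (b.2.2.2.2.2, b.1), b.2.1, b.2.2.2.1),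
      fun _ => rfl, fun _ => rfl⟩ _ _ fun _ => rfl

end MatrixFamilies

section StandardRMatrix

variable {R : Type u} [CommRing R] {n : ℕ}

/-- The off-diagonal coefficients `-(q - q⁻¹) q^{-2(j - i)}` of the inverse `𝓡̃`. -/
def invOffDiag (qq : Rˣ) (i j : Fin n) : R :=
  -((qq : R) - ((qq⁻¹ : Rˣ) : R)) * ((qq⁻¹ : Rˣ) : R) ^ (2 * ((j : ℕ) - i))

/-- The value `𝓡̃(x^t_j, x^r_p)`. -/
def invRmatVal (n : ℕ) (qr : Rˣ) (t j r p : Fin n) : R :=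
  (qr : R) *
    ((if t = j then 1 else 0) * (if r = p then 1 else 0) *
        (if j = p then (((qr ^ n)⁻¹ : Rˣ) : R) else 1)
      + (if t < j then 1 else 0) * (if p = t then 1 else 0) * (if r = j then 1 else 0) *
          invOffDiag (qr ^ n) t j)

lemma inv_add_sum_invOffDiag (qq : Rˣ) {i j : Fin n} (hij : i < j) :
    ((qq⁻¹ : Rˣ) : R) + ∑ s ∈ Finset.Ioo i j, invOffDiag qq i s =
      (qq : R) * ((qq⁻¹ : Rˣ) : R) ^ (2 * ((j : ℕ) - i)) := by
  have hq : (qq : R) * ((qq⁻¹ : Rˣ) : R) = 1 := by simp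
  have h : ∑ s ∈ Finset.Ioo i j, invOffDiag qq i s = ∑ s ∈ Finset.Ioo (i : ℕ) j,
      -((qq : R) - ((qq⁻¹ : Rˣ) : R)) * ((qq⁻¹ : Rˣ) : R) ^ (2 * (s - i)) := by
    rw [← Fin.map_valEmbedding_Ioo, Finset.sum_map]
    rfl
  rw [h]
  obtain ⟨d, hd⟩ := Nat.exists_eq_add_of_lt (Fin.lt_def.mp hij)
  rw [hd]
  generalize (i : ℕ) = a
  generalize (qq : R) = q at *
  generalize ((qq⁻¹ : Rˣ) : R) = qi at *
  clear h hd hij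
  induction d with
  | zero =>
    have : Finset.Ioo a (a + 0 + 1) = ∅ := by ext; simp
    rw [this, show 2 * (a + 0 + 1 - a) = 2 by omega]
    linear_combination -qi * hq
  | succ d ih =>
    have : Finset.Ioo a (a + (d + 1) + 1) = insert (a + d + 1) (Finset.Ioo a (a + d + 1)) := by
      ext; simp; omega
    rw [this, Finset.sum_insert (by simp), add_left_comm, ih,
      show a + (d + 1) + 1 - a = d + 2 by omega, show a + d + 1 - a = d + 1 by omega]
    rw [show 2 * (d + 2) = 2 * (d + 1) + 2 by ring]
    generalize 2 * (d + 1) = e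
    linear_combination -qi ^ (e + 1) * hq

variable {M : Type*} [AddCommGroup M] [Module R M]

lemma sum_RmatVal_smul (qr : Rˣ) (F : Fin n → Fin n → M) (k m : Fin n) :
    ∑ s, ∑ p, RmatVal n qr k s p m • F s p =
      ((qr⁻¹ : Rˣ) : R) • ((if k = m then ((qr ^ n : Rˣ) : R) else 1) • F k m +
        if k = m then (((qr ^ n : Rˣ) : R) - (((qr ^ n)⁻¹ : Rˣ) : R)) •
          ∑ s ∈ Finset.Ioi k, F s s else 0) := by
  have h2 : ∀ s p : Fin n, RmatVal n qr k s p m • F s p =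
      ((qr⁻¹ : Rˣ) : R) • ((if k = s then if p = m then
          (if k = m then ((qr ^ n : Rˣ) : R) else 1) • F k m else 0 else 0) +
        if k = m then if p = s then if k < s then
          (((qr ^ n : Rˣ) : R) - (((qr ^ n)⁻¹ : Rˣ) : R)) • F s s else 0 else 0 else 0) := by
    intro s p
    rw [RmatVal, mul_smul, add_smul]
    congr 2
    · split_ifs <;> simp_all
    · split_ifs <;> first | (exfalso; order) | (subst_vars; simp)
  simp only [h2, ← Finset.smul_sum, Finset.sum_add_distrib]
  congr 2
  · simp
  · by_cases h : k = m
    · simp only [h, if_true, Finset.sum_ite_eq', Finset.mem_univ]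
      rw [← Finset.sum_filter, Finset.smul_sum]
      congr 1
      ext; simp
    · simp [h]

lemma sum_RmatVal_smul' (qr : Rˣ) (F : Fin n → Fin n → M) (j k : Fin n) :
    ∑ s, ∑ p, RmatVal n qr s j k p • F s p =
      ((qr⁻¹ : Rˣ) : R) • ((if j = k then ((qr ^ n : Rˣ) : R) else 1) • F j k +
        if j = k then (((qr ^ n : Rˣ) : R) - (((qr ^ n)⁻¹ : Rˣ) : R)) •
          ∑ s ∈ Finset.Iio j, F s s else 0) := by
  have h2 : ∀ s p : Fin n, RmatVal n qr s j k p • F s p =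
      ((qr⁻¹ : Rˣ) : R) • ((if s = j then if k = p then
          (if j = k then ((qr ^ n : Rˣ) : R) else 1) • F j k else 0 else 0) +
        if j = k then if s = p then if s < j then
          (((qr ^ n : Rˣ) : R) - (((qr ^ n)⁻¹ : Rˣ) : R)) • F s s else 0 else 0 else 0) := by
    intro s p
    rw [RmatVal, mul_smul, add_smul]
    congr 2
    · split_ifs <;> simp_all
    · split_ifs <;> first | (exfalso; order) | (subst_vars; simp)
  simp only [h2, ← Finset.smul_sum, Finset.sum_add_distrib]
  congr 2
  · simp
  · by_cases h : j = k
    · simp only [h, if_true, Finset.sum_ite_eq, Finset.mem_univ]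
      rw [← Finset.sum_filter, Finset.smul_sum]
      congr 1
      ext; simp
    · simp [h]

lemma sum_invRmatVal_smul (qr : Rˣ) (F : Fin n → Fin n → M) (j r : Fin n) :
    ∑ t, ∑ p, invRmatVal n qr t j r p • F t p =
      (qr : R) • ((if r = j then (((qr ^ n)⁻¹ : Rˣ) : R) else 1) • F j r +
        if r = j then ∑ t ∈ Finset.Iio j, invOffDiag (qr ^ n) t j • F t t else 0) := by
  have h2 : ∀ t p : Fin n, invRmatVal n qr t j r p • F t p =
      (qr : R) • ((if t = j then if r = p then
          (if r = j then (((qr ^ n)⁻¹ : Rˣ) : R) else 1) • F j r else 0 else 0) +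
        if r = j then if p = t then if t < j then
          invOffDiag (qr ^ n) t j • F t t else 0 else 0 else 0) := by
    intro t p
    rw [invRmatVal, mul_smul, add_smul]
    congr 2
    · split_ifs <;> simp_all
    · split_ifs <;> first | (exfalso; order) | (subst_vars; simp)
  simp only [h2, ← Finset.smul_sum, Finset.sum_add_distrib]
  congr 2
  · simp
  · by_cases h : r = j
    · simp only [h, if_true, Finset.sum_ite_eq', Finset.mem_univ]
      rw [← Finset.sum_filter]
      congr 1
      ext; simp
    · simp [h]

lemma sum_RmatVal_mul_invRmatVal (qr : Rˣ) (i j k l : Fin n) :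
    ∑ s, ∑ p, RmatVal n qr s j k p * invRmatVal n qr i s p l =
      if i = j then if k = l then 1 else 0 else 0 := by
  have h := sum_RmatVal_smul' qr (fun s p => invRmatVal n qr i s p l) j k
  simp only [smul_eq_mul] at h
  rw [h]
  have hr : ((qr⁻¹ : Rˣ) : R) * (qr : R) = 1 := by simp
  have hq : ((qr ^ n : Rˣ) : R) * (((qr ^ n)⁻¹ : Rˣ) : R) = 1 := Units.mul_inv _
  have hdiag : ∑ s ∈ Finset.Iio j, invRmatVal n qr i s s l =
      if i = l then if i < j then (qr : R) * ((((qr ^ n)⁻¹ : Rˣ) : R) +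
        ∑ s ∈ Finset.Ioo i j, invOffDiag (qr ^ n) i s) else 0 else 0 := by
    simp only [invRmatVal, ← Finset.mul_sum, Finset.sum_add_distrib]
    by_cases hil : i = l
    · subst hil
      by_cases hij : i < j
      · simp only [if_true, hij]
        congr 2
        · rw [Finset.sum_eq_single i] <;> simp_all [eq_comm]
        · simp only [mul_one, ite_mul, one_mul, zero_mul]
          rw [← Finset.sum_filter]
          congr 1
          ext; simp [and_comm]
      · simp only [hij, if_true, if_false]
        rw [Finset.sum_eq_zero, Finset.sum_eq_zero]
        · simp
        · intro s hs
          have : ¬ i < s := fun h => hij (h.trans (Finset.mem_Iio.mp hs))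
          simp [this]
        · intro s hs
          have : i ≠ s := fun h => hij (h ▸ Finset.mem_Iio.mp hs)
          simp [this]
    · simp only [hil, Ne.symm hil, if_false]
      rw [Finset.sum_eq_zero]
      · simp
      · intro s hs
        by_cases h1 : i = s <;> by_cases h2 : s = l <;> simp_all
  rw [hdiag]
  rcases lt_trichotomy i j with hij | rfl | hij
  · rw [inv_add_sum_invOffDiag _ hij]
    simp only [invRmatVal, invOffDiag, hij, hij.ne, if_true, if_false]
    by_cases hjk : j = k
    · by_cases hil : i = l
      · simp only [hjk, hil, if_true]
        ring
      · simp [hil, Ne.symm hil]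
    · simp [hjk, Ne.symm hjk]
  · simp only [invRmatVal, lt_irrefl, if_true, if_false]
    by_cases hik : i = k
    · subst hik
      by_cases hil : i = l
      · subst hil
        simp only [if_true]
        linear_combination hr + ((qr⁻¹ : Rˣ) : R) * (qr : R) * hq
      · simp [hil]
    · by_cases hkl : k = l
      · subst hkl
        simp [hik]
      · simp [hkl, hik]
  · simp [invRmatVal, hij.not_gt, hij.ne']

end StandardRMatrix

section Recursion

variable {R : Type u} [CommRing R] {A : Type u} [Ring A] [Bialgebra R A]
variable {S : Type} [Fintype S] [DecidableEq S]
variable {n : ℕ} {qr : Rˣ} {ρ ρt : A →ₗ[R] A →ₗ[R] R} {x : Fin n → Fin n → A} {y : S → S → A}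

/-- Explicit form of the inverse on generators. -/
lemma IsCopConvInv.apply_generators (hρt : IsCopConvInv ρ ρt) (hx : IsMatrixFamily R x)
    (hρx : ∀ i j k l, ρ (x i j) (x k l) = RmatVal n qr i j k l) (t j r p : Fin n) :
    ρt (x t j) (x r p) = invRmatVal n qr t j r p := by
  have h := hρt.pairMatrix_eq hx hx (fun t j => Matrix.of fun r p => invRmatVal n qr t j r p)
    (fun i j => by
      ext k l
      simp only [Matrix.sum_apply, Matrix.mul_apply, pairMatrix, Matrix.of_apply, hρx,
        sum_RmatVal_mul_invRmatVal]
      split_ifs <;> simp_all [Matrix.one_apply]) t j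
  exact congrFun (congrFun h r) p

lemma covCoeff_mul_generator (hρ : IsDQT ρ) (hρt : IsCopConvInv ρ ρt)
    (hy : IsMatrixFamily R y) (hx : IsMatrixFamily R x)
    (hρx : ∀ i j k l, ρ (x i j) (x k l) = RmatVal n qr i j k l) (i : S) {k : Fin n}
    (hsupp : ∀ p ≤ k, ∀ s, k < s → covCoeff ρ ρt x y i i p s = 0)
    {β r : Fin n} (hβ : β ≤ k) (hr : r ≤ k) (m : Fin n) :
    covCoeff ρ ρt x (mulFamily y x) (i, k) (i, β) r m =
      (if k = m then ((qr ^ n : Rˣ) : R) else 1) •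
        ((if r = β then (((qr ^ n)⁻¹ : Rˣ) : R) else 1) • (covCoeff ρ ρt x y i i r m * x k β) +
          if r = β then ∑ t ∈ Finset.Iio β, invOffDiag (qr ^ n) t β •
            (covCoeff ρ ρt x y i i t m * x k t) else 0) := by
  rw [covCoeff_mulFamily hρ hρt hy hx hx]
  simp only [hρx, hρt.apply_generators hx hρx]
  have hin : ∀ t p : Fin n, p ≤ k → (∑ s', ∑ p', RmatVal n qr k s' p' m •
      (covCoeff ρ ρt x y i i p p' * x s' t)) = ((qr⁻¹ : Rˣ) : R) •
        (if k = m then ((qr ^ n : Rˣ) : R) else 1) • (covCoeff ρ ρt x y i i p m * x k t) := by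
    intro t p hp
    rw [sum_RmatVal_smul qr (fun s' p' => covCoeff ρ ρt x y i i p p' * x s' t)]
    rw [Finset.sum_eq_zero]
    · simp
    · intro s hs
      rw [hsupp p hp s (Finset.mem_Ioi.mp hs), zero_mul]
  rw [sum_invRmatVal_smul qr (fun t p => ∑ s', ∑ p', RmatVal n qr k s' p' m •
      (covCoeff ρ ρt x y i i p p' * x s' t)), hin _ _ hr,
    Finset.sum_congr rfl fun t ht => by
      rw [hin t t ((Finset.mem_Iio.mp ht).le.trans hβ)]]
  have hq : (qr : R) * ((qr⁻¹ : Rˣ) : R) = 1 := by simp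
  generalize (if k = m then ((qr ^ n : Rˣ) : R) else 1) = c
  generalize (if r = β then (((qr ^ n)⁻¹ : Rˣ) : R) else 1) = d
  generalize (qr : R) = a at *
  generalize ((qr⁻¹ : Rˣ) : R) = b at *
  have hs : (if r = β then ∑ t ∈ Finset.Iio β, invOffDiag (qr ^ n) t β •
      b • c • (covCoeff ρ ρt x y i i t m * x k t) else 0) =
      (b * c) • (if r = β then ∑ t ∈ Finset.Iio β, invOffDiag (qr ^ n) t β •
        (covCoeff ρ ρt x y i i t m * x k t) else 0) := by
    split_ifs
    · rw [Finset.smul_sum]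
      refine Finset.sum_congr rfl fun t _ => ?_
      simp only [smul_smul]
      congr 1
      ring
    · simp
  rw [hs]
  simp only [smul_add, smul_smul]
  congr 2
  · linear_combination (d * c) * hq
  · linear_combination c * hq

/-- The coefficients of `(x^k_k)^N ⬝ x^r_l` for `r ≤ k`. -/
def IsDiagPowCoeff (qr : Rˣ) (x : Fin n → Fin n → A) (k : Fin n) (N : ℕ)
    (C : Fin n → Fin n → A) : Prop :=
  ∀ r ≤ k, ∀ m, C r m =
    if r = m then x k k ^ N else if r = k ∧ m < k then
      (-(1 - (((qr ^ n)⁻¹ : Rˣ) : R) ^ (2 * N)) *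
        (((qr ^ n : Rˣ) : R) * (((qr ^ n)⁻¹ : Rˣ) : R) ^ (2 * ((k : ℕ) - m)))) •
          (x k k ^ (N - 1) * x k m) else 0

lemma IsDiagPowCoeff.eq_zero {k : Fin n} {N : ℕ} {C : Fin n → Fin n → A}
    (hC : IsDiagPowCoeff (R := R) qr x k N C) : ∀ p ≤ k, ∀ s, k < s → C p s = 0 := by
  intro p hp s hs
  rw [hC p hp s, if_neg (by order), if_neg (by rintro ⟨-, h⟩; order)]

lemma IsDiagPowCoeff.of_lt {k : Fin n} {N : ℕ} {C : Fin n → Fin n → A}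
    (hC : IsDiagPowCoeff (R := R) qr x k N C) {r : Fin n} (hr : r < k) (m : Fin n) :
    C r m = if r = m then x k k ^ N else 0 := by
  rw [hC r hr.le m]
  simp [hr.ne]

lemma IsDiagPowCoeff.sum_Iio {k : Fin n} {N : ℕ} {C : Fin n → Fin n → A}
    (hC : IsDiagPowCoeff (R := R) qr x k N C) (f : Fin n → R) {β : Fin n} (hβ : β ≤ k)
    (m : Fin n) :
    ∑ t ∈ Finset.Iio β, f t • (C t m * x k t) =
      if m < β then f m • (x k k ^ N * x k m) else 0 := by
  have h : ∀ t ∈ Finset.Iio β, f t • (C t m * x k t) =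
      if t = m then f m • (x k k ^ N * x k m) else 0 := by
    intro t ht
    rw [hC.of_lt ((Finset.mem_Iio.mp ht).trans_le hβ)]
    split_ifs with h
    · rw [h]
    · simp
  rw [Finset.sum_congr rfl h, Finset.sum_ite_eq']
  simp

lemma isDiagPowCoeff_succ (hrel : OqMnRels n (qr ^ n) x) (hρ : IsDQT ρ) (hρt : IsCopConvInv ρ ρt)
    (hy : IsMatrixFamily R y) (hx : IsMatrixFamily R x)
    (hρx : ∀ i j k l, ρ (x i j) (x k l) = RmatVal n qr i j k l) (i : S) {k : Fin n} {N : ℕ}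
    (hC : IsDiagPowCoeff (R := R) qr x k N (covCoeff ρ ρt x y i i)) :
    IsDiagPowCoeff (R := R) qr x k (N + 1)
      (covCoeff ρ ρt x (mulFamily y x) (i, k) (i, k)) := by
  have hq : ((qr ^ n : Rˣ) : R) * (((qr ^ n)⁻¹ : Rˣ) : R) = 1 := Units.mul_inv _
  intro r hr m
  rw [covCoeff_mul_generator hρ hρt hy hx hρx i hC.eq_zero le_rfl hr]
  rcases hr.lt_or_eq with hrk | rfl
  · rw [hC.of_lt hrk]
    by_cases hrm : r = m
    · subst hrm
      simp [hrk.ne, hrk.ne', pow_succ]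
    · simp [hrm, hrk.ne]
  · rw [if_pos rfl, if_pos rfl, hC.sum_Iio _ le_rfl, hC r le_rfl m]
    rcases lt_trichotomy m r with hm | rfl | hm
    · simp only [hm, hm.ne', and_self, if_true, if_false, one_smul, Nat.add_sub_cancel]
      have hcomm : (1 - (((qr ^ n)⁻¹ : Rˣ) : R) ^ (2 * N)) • (x r r ^ (N - 1) * x r m * x r r) =
          (1 - (((qr ^ n)⁻¹ : Rˣ) : R) ^ (2 * N)) • (((qr ^ n)⁻¹ : Rˣ) : R) •
            (x r r ^ N * x r m) := by
        rcases N with _ | N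
        · simp
        · have h1 : x r m * x r r = (((qr ^ n)⁻¹ : Rˣ) : R) • (x r r * x r m) := by
            rw [hrel.1 r m r hm, smul_smul, mul_comm, hq, one_smul]
          rw [Nat.add_sub_cancel, mul_assoc, h1, mul_smul_comm, ← mul_assoc, pow_succ]
      rw [smul_mul_assoc, mul_comm, mul_neg, ← neg_mul, mul_smul, hcomm]
      simp only [smul_smul, ← add_smul, invOffDiag]
      congr 1
      linear_combination (-(((qr ^ n)⁻¹ : Rˣ) : R) *
        (((qr ^ n)⁻¹ : Rˣ) : R) ^ (2 * ((r : ℕ) - m))) * hq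
    · simp only [if_true, lt_irrefl, if_false, add_zero, smul_smul, hq, one_smul, pow_succ]
    · simp [hm.ne, hm.not_gt]

lemma exists_diagPow_family (hrel : OqMnRels n (qr ^ n) x) (hρ : IsDQT ρ)
    (hρt : IsCopConvInv ρ ρt) (hx : IsMatrixFamily R x)
    (hρx : ∀ i j k l, ρ (x i j) (x k l) = RmatVal n qr i j k l) (k : Fin n) (N : ℕ) :
    ∃ (S : Type) (_ : Fintype S) (_ : DecidableEq S) (y : S → S → A) (i : S),
      IsMatrixFamily R y ∧ y i i = x k k ^ N ∧
      IsDiagPowCoeff (R := R) qr x k N (covCoeff ρ ρt x y i i) := by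
  induction N with
  | zero =>
    refine ⟨Unit, inferInstance, inferInstance, fun _ _ => 1, (), isMatrixFamily_one, by simp,
      fun r hr m => ?_⟩
    have h := hρt.sum_pairMatrix_mul' (isMatrixFamily_one (R := R) (A := A)) hx () ()
    simp only [Finset.univ_unique, Finset.sum_singleton, if_true] at h
    simp [covCoeff, h, Matrix.one_apply]
  | succ N ih =>
    obtain ⟨S, _, _, y, i, hy, hyi, hC⟩ := ih
    exact ⟨S × Fin n, inferInstance, inferInstance, mulFamily y x, (i, k), hy.mul hx,
      by simp [mulFamily, hyi, pow_succ], isDiagPowCoeff_succ hrel hρ hρt hy hx hρx i hC⟩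

end Recursion

/-- Recursion: in the common underlying module of `O_q(M_n)` and `B_q(M_n)`,
`(x^k_k)^N x^k_l = ((x^k_k)^N) ⬝ x^k_l + (1 − q^{−2N}) ∑_{β<k} ((x^k_k)^{N−1} x^k_β) ⬝ x^β_l`,
where juxtaposed products and powers are taken in `O_q(M_n)` and `⬝` is the
covariantized product. -/
theorem diag_power_mul_recursion
    {R : Type u} [CommRing R] (n : ℕ) (hn : 2 ≤ n) (qr : Rˣ)
    {A : Type u} [Ring A] [Bialgebra R A] (x : Fin n → Fin n → A)
    (hx : OqMnRels n (qr ^ n) x)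
    (hxuniv : ∀ (B : Type u) [Ring B] [Algebra R B] (y : Fin n → Fin n → B),
      OqMnRels n (qr ^ n) y → ∃! f : A →ₐ[R] B, ∀ i j, f (x i j) = y i j)
    (hΔ : ∀ i j, Coalgebra.comul (R := R) (x i j) = ∑ k, x i k ⊗ₜ[R] x k j)
    (hε : ∀ i j, Coalgebra.counit (R := R) (x i j) = if i = j then (1 : R) else 0)
    (ρ : A →ₗ[R] A →ₗ[R] R) (hρ : IsDQT ρ)
    (hρx : ∀ i j k l, ρ (x i j) (x k l) = RmatVal n qr i j k l)
    (ρt : A →ₗ[R] A →ₗ[R] R) (hρt : IsCopConvInv ρ ρt)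
    (cmul : A → A → A) (hcmul : CovChar ρ ρt cmul)
    (N : ℕ) (hN : 1 ≤ N) (k l : Fin n) :
    x k k ^ N * x k l =
      cmul (x k k ^ N) (x k l) +
        (1 - qzpow (qr ^ n) (-(2 * (N : ℤ)))) •
          ∑ β ∈ Finset.univ.filter (fun β : Fin n => β < k),
            cmul (x k k ^ (N - 1) * x k β) (x β l) := by
  have hM : IsMatrixFamily R x := ⟨hΔ, hε⟩
  obtain ⟨N, rfl⟩ := Nat.exists_eq_add_of_le' hN
  obtain ⟨S, _, _, y, i, hy, hyi, hC⟩ := exists_diagPow_family hx hρ hρt hM hρx k N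
  have hC' := isDiagPowCoeff_succ hx hρ hρt hy hM hρx i hC
  have hcov : ∀ β, cmul (x k k ^ N * x k β) (x β l) =
      ∑ m, covCoeff ρ ρt x (mulFamily y x) (i, k) (i, β) β m * x m l := by
    intro β
    rw [← hcmul.apply_eq_sum_covCoeff (hy.mul hM) hM, mulFamily, hyi]
  have hβ : ∀ β < k, ∀ m, covCoeff ρ ρt x (mulFamily y x) (i, k) (i, β) β m =
      (if m = β then (((qr ^ n)⁻¹ : Rˣ) : R) else 0) • (x k k ^ N * x k m) +
        (if m < β then invOffDiag (qr ^ n) m β else 0) • (x k k ^ N * x k m) := by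
    intro β hβ m
    rw [covCoeff_mul_generator hρ hρt hy hM hρx i hC.eq_zero hβ.le hβ.le, if_pos rfl, if_pos rfl,
      hC.sum_Iio _ hβ.le, hC.of_lt hβ]
    rcases lt_trichotomy m β with h | rfl | h
    · simp [h, h.ne, h.ne', (h.trans hβ).ne']
    · simp [hβ.ne']
    · simp [h.ne, h.ne', h.not_gt]
  have hsum : ∀ m, ∑ β ∈ Finset.univ.filter (fun β : Fin n => β < k),
      covCoeff ρ ρt x (mulFamily y x) (i, k) (i, β) β m =
      if m < k then (((qr ^ n : Rˣ) : R) * (((qr ^ n)⁻¹ : Rˣ) : R) ^ (2 * ((k : ℕ) - m))) •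
          (x k k ^ N * x k m) else 0 := by
    intro m
    rw [Finset.sum_congr rfl fun β h => hβ β (Finset.mem_filter.mp h).2 m]
    rw [Finset.sum_add_distrib, ← Finset.sum_smul, ← Finset.sum_smul, ← add_smul,
      Finset.sum_ite_eq, ← Finset.sum_filter]
    by_cases hm : m < k
    · rw [if_pos hm, if_pos (by simpa using hm), ← inv_add_sum_invOffDiag _ hm]
      congr 3
      ext; simp [and_comm]
    · rw [if_neg hm, if_neg (by simpa using hm), Finset.sum_eq_zero]
      · simp
      · intro β hb
        simp only [Finset.mem_filter, Finset.mem_univ, true_and] at hb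
        exact absurd (hb.2.trans hb.1) hm
  have hz : qzpow (qr ^ n) (-(2 * ((N + 1 : ℕ) : ℤ))) =
      (((qr ^ n)⁻¹ : Rˣ) : R) ^ (2 * (N + 1)) := by
    rw [qzpow, zpow_neg, ← inv_zpow, ← Units.val_pow_eq_pow_val]
    norm_cast
  rw [Nat.add_sub_cancel, hz, pow_succ, hcov k]
  simp only [hcov]
  rw [Finset.sum_comm, Finset.smul_sum, ← Finset.sum_add_distrib]
  simp only [← Finset.sum_mul, hsum, ← smul_mul_assoc, ← add_mul]
  rw [Finset.sum_eq_single k]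
  · rw [hC' k le_rfl k]
    simp [pow_succ]
  · intro m _ hm
    rw [hC' k le_rfl m, if_neg (Ne.symm hm)]
    by_cases h : m < k
    · simp only [h, and_self, if_true, Nat.add_sub_cancel]
      rw [smul_mul_assoc, smul_smul, ← add_smul, neg_mul, neg_add_cancel, zero_smul, zero_mul]
    · simp [h]
  · simp

end
end

section
/- Let n ≥ 2 and R a commutative ring with invertible element q^{1/n}, q := (q^{1/n})^n. In the common underlying R-module of O_q(M_n) and B_q(M_n), for every integer N ≥ 1 and all 1 ≤ k, l ≤ n: (x^k_k)^N x^k_l = Σ_{i=0}^{N} Σ_β (Π_{j=1}^{i} (1 − q^{−2(N+1−j)})) ((x^k_k)^{N−i}) ⬝ x^{β₁}_{β₂} ⬝ x^{β₂}_{β₃} ⬝ ⋯ ⬝ x^{β_i}_{β_{i+1}} ⬝ x^{β_{i+1}}_l, where the inner sum runs over all tuples β = (β₁, …, β_{i+1}) with β₁ = k and 1 ≤ β_j < k for all 1 < j ≤ i + 1; here powers (x^k_k)^m and the left-hand side product are taken with the original product of O_q(M_n), and ⬝ is the covariantized product. -/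
open scoped TensorProduct BigOperators

noncomputable section

universe u

section MatrixCoefficients

variable {R : Type u} [CommRing R] {A : Type u} [Ring A] [Bialgebra R A]
  {ρ ρt : A →ₗ[R] A →ₗ[R] R} {cmul : A → A → A}

/-- Every finite type embeds into the natural numbers. -/
def fintypeEmbNat (I : Type*) [Fintype I] : I ↪ ℕ :=
  (Fintype.equivFin I).toEmbedding.trans Fin.valEmbedding

lemma extend_fintypeEmbNat {I : Type*} [Fintype I] (f : I → A) (i : I) :
    Function.extend (fintypeEmbNat I) f 0 (fintypeEmbNat I i) = f i :=
  (fintypeEmbNat I).injective.extend_apply f 0 i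

lemma CovChar.eq_sum (h : CovChar ρ ρt cmul) {I J : Type*} [Fintype I] [Fintype J]
    {a b : A} {a1 a2 a3 : I → A} {b1 b2 b3 : J → A}
    (ha : comul2 (R := R) a = ∑ i, a1 i ⊗ₜ[R] (a2 i ⊗ₜ[R] a3 i))
    (hb : comul2 (R := R) b = ∑ j, b1 j ⊗ₜ[R] (b2 j ⊗ₜ[R] b3 j)) :
    cmul a b = ∑ i, ∑ j, (ρt (a3 i) (b1 j) * ρ (a1 i) (b2 j)) • (a2 i * b3 j) := by
  have := h a b (Finset.univ.map (fintypeEmbNat I)) (Finset.univ.map (fintypeEmbNat J))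
    (Function.extend (fintypeEmbNat I) a1 0) (Function.extend (fintypeEmbNat I) a2 0)
    (Function.extend (fintypeEmbNat I) a3 0) (Function.extend (fintypeEmbNat J) b1 0)
    (Function.extend (fintypeEmbNat J) b2 0) (Function.extend (fintypeEmbNat J) b3 0)
    (by simpa [extend_fintypeEmbNat] using ha) (by simpa [extend_fintypeEmbNat] using hb)
  simpa [extend_fintypeEmbNat] using this

lemma exists_fintype_sum_tmul (t : A ⊗[R] (A ⊗[R] A)) :
    ∃ (m : ℕ) (a1 a2 a3 : Fin m → A), t = ∑ i, a1 i ⊗ₜ[R] (a2 i ⊗ₜ[R] a3 i) := by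
  induction t using TensorProduct.induction_on with
  | zero => exact ⟨0, fun _ => 0, fun _ => 0, fun _ => 0, by simp⟩
  | tmul a t =>
    obtain ⟨s, rfl⟩ := TensorProduct.exists_finset t
    refine ⟨s.card, fun _ => a, fun i => (s.equivFin.symm i).1.1,
      fun i => (s.equivFin.symm i).1.2, ?_⟩
    rw [TensorProduct.tmul_sum, ← Finset.sum_coe_sort]
    exact (Equiv.sum_comp s.equivFin.symm
      (fun p : s => a ⊗ₜ[R] (p.1.1 ⊗ₜ[R] p.1.2))).symm
  | add s t hs ht =>
    obtain ⟨m, a1, a2, a3, rfl⟩ := hs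
    obtain ⟨m', b1, b2, b3, rfl⟩ := ht
    exact ⟨m + m', Fin.append a1 b1, Fin.append a2 b2, Fin.append a3 b3, by
      simp [Fin.sum_univ_add]⟩

/-- The covariantized product as a bilinear map. -/
def CovChar.toLinear (h : CovChar ρ ρt cmul) : A →ₗ[R] A →ₗ[R] A :=
  LinearMap.mk₂ R cmul
    (fun a a' b => by
      obtain ⟨m, a1, a2, a3, ha⟩ := exists_fintype_sum_tmul (comul2 (R := R) a)
      obtain ⟨m', a1', a2', a3', ha'⟩ := exists_fintype_sum_tmul (comul2 (R := R) a')
      obtain ⟨r, b1, b2, b3, hb⟩ := exists_fintype_sum_tmul (comul2 (R := R) b)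
      have hs : comul2 (R := R) (a + a') = ∑ i, Fin.append a1 a1' i ⊗ₜ[R]
          (Fin.append a2 a2' i ⊗ₜ[R] Fin.append a3 a3' i) := by
        simp [Fin.sum_univ_add, ha, ha']
      rw [h.eq_sum ha hb, h.eq_sum ha' hb, h.eq_sum hs hb]
      simp [Fin.sum_univ_add])
    (fun c a b => by
      obtain ⟨m, a1, a2, a3, ha⟩ := exists_fintype_sum_tmul (comul2 (R := R) a)
      obtain ⟨r, b1, b2, b3, hb⟩ := exists_fintype_sum_tmul (comul2 (R := R) b)
      have hs : comul2 (R := R) (c • a) = ∑ i, a1 i ⊗ₜ[R] ((c • a2 i) ⊗ₜ[R] a3 i) := by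
        simp only [map_smul, ha, Finset.smul_sum, ← TensorProduct.smul_tmul',
          TensorProduct.tmul_smul]
      rw [h.eq_sum ha hb, h.eq_sum hs hb]
      simp only [Finset.smul_sum, smul_mul_assoc]
      exact Finset.sum_congr rfl fun _ _ => Finset.sum_congr rfl fun _ _ => smul_comm _ _ _)
    (fun a b b' => by
      obtain ⟨m, a1, a2, a3, ha⟩ := exists_fintype_sum_tmul (comul2 (R := R) a)
      obtain ⟨m', b1', b2', b3', hb'⟩ := exists_fintype_sum_tmul (comul2 (R := R) b')
      obtain ⟨r, b1, b2, b3, hb⟩ := exists_fintype_sum_tmul (comul2 (R := R) b)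
      have hs : comul2 (R := R) (b + b') = ∑ i, Fin.append b1 b1' i ⊗ₜ[R]
          (Fin.append b2 b2' i ⊗ₜ[R] Fin.append b3 b3' i) := by
        simp [Fin.sum_univ_add, hb, hb']
      rw [h.eq_sum ha hb, h.eq_sum ha hb', h.eq_sum ha hs]
      simp [Fin.sum_univ_add, Finset.sum_add_distrib])
    (fun c a b => by
      obtain ⟨m, a1, a2, a3, ha⟩ := exists_fintype_sum_tmul (comul2 (R := R) a)
      obtain ⟨r, b1, b2, b3, hb⟩ := exists_fintype_sum_tmul (comul2 (R := R) b)
      have hs : comul2 (R := R) (c • b) = ∑ i, b1 i ⊗ₜ[R] (b2 i ⊗ₜ[R] (c • b3 i)) := by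
        simp [hb, Finset.smul_sum]
      rw [h.eq_sum ha hb, h.eq_sum ha hs]
      simp only [Finset.smul_sum, mul_smul_comm]
      exact Finset.sum_congr rfl fun _ _ => Finset.sum_congr rfl fun _ _ => smul_comm _ _ _)

lemma CovChar.toLinear_apply (h : CovChar ρ ρt cmul) (a b : A) : h.toLinear a b = cmul a b := rfl

/-- A square matrix over a bialgebra is multiplicative if its entries span a matrix
subcoalgebra in the standard way. -/
structure IsMultiplicativeMatrix (R : Type u) [CommRing R] [Bialgebra R A]
    {ι : Type*} [Fintype ι] [DecidableEq ι]
    (u : ι → ι → A) : Prop where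
  comul : ∀ i j, Coalgebra.comul (R := R) (u i j) = ∑ k, u i k ⊗ₜ[R] u k j
  counit : ∀ i j, Coalgebra.counit (R := R) (u i j) = if i = j then (1 : R) else 0

variable {ι κ ν : Type*} [Fintype ι] [DecidableEq ι] [Fintype κ] [DecidableEq κ]
  [Fintype ν] [DecidableEq ν] {u : ι → ι → A} {v : κ → κ → A} {w : ν → ν → A}

lemma isMultiplicativeMatrix_one :
    IsMultiplicativeMatrix R (fun _ _ : Unit => (1 : A)) :=
  ⟨by simp [Algebra.TensorProduct.one_def], by simp⟩

/-- The Kronecker product of multiplicative matrices is multiplicative. -/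
lemma IsMultiplicativeMatrix.mul (hu : IsMultiplicativeMatrix R u)
    (hv : IsMultiplicativeMatrix R v) :
    IsMultiplicativeMatrix R (fun p r : ι × κ => u p.1 r.1 * v p.2 r.2) where
  comul p r := by
    rw [Bialgebra.comul_mul, hu.comul, hv.comul, Finset.sum_mul_sum, Fintype.sum_prod_type]
    simp
  counit p r := by
    rw [Bialgebra.counit_mul, hu.counit, hv.counit]
    simp only [Prod.ext_iff]
    split_ifs <;> simp_all

lemma IsMultiplicativeMatrix.comul2 (hu : IsMultiplicativeMatrix R u) (i j : ι) :
    comul2 (R := R) (u i j) =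
      ∑ p : ι × ι, u i p.1 ⊗ₜ[R] (u p.1 p.2 ⊗ₜ[R] u p.2 j) := by
  simp [_root_.comul2, hu.comul, Fintype.sum_prod_type, TensorProduct.tmul_sum]

lemma IsDQT.mul_left (hρ : IsDQT ρ) (a b : A) (hw : IsMultiplicativeMatrix R w) (m o : ν) :
    ρ (a * b) (w m o) = ∑ p, ρ a (w m p) * ρ b (w p o) := by
  have := hρ.1 a b (w m o) (Finset.univ.map (fintypeEmbNat ν))
    (Function.extend (fintypeEmbNat ν) (fun p => w m p) 0)
    (Function.extend (fintypeEmbNat ν) (fun p => w p o) 0)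
    (by simpa [extend_fintypeEmbNat] using hw.comul m o)
  simpa [extend_fintypeEmbNat] using this

lemma IsDQT.mul_right (hρ : IsDQT ρ) (hu : IsMultiplicativeMatrix R u) (i j : ι) (b c : A) :
    ρ (u i j) (b * c) = ∑ p, ρ (u i p) c * ρ (u p j) b := by
  have := hρ.2.1 (u i j) b c (Finset.univ.map (fintypeEmbNat ι))
    (Function.extend (fintypeEmbNat ι) (fun p => u i p) 0)
    (Function.extend (fintypeEmbNat ι) (fun p => u p j) 0)
    (by simpa [extend_fintypeEmbNat] using hu.comul i j)
  simpa [extend_fintypeEmbNat] using this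

lemma IsDQT.mul_comm (hρ : IsDQT ρ) (hu : IsMultiplicativeMatrix R u)
    (hv : IsMultiplicativeMatrix R v) (i j : ι) (k l : κ) :
    ∑ p, ∑ r, ρ (u p j) (v r l) • (v k r * u i p) =
      ∑ p, ∑ r, ρ (u i p) (v k r) • (u p j * v r l) := by
  have := hρ.2.2.2.2 (u i j) (v k l) (Finset.univ.map (fintypeEmbNat ι))
    (Finset.univ.map (fintypeEmbNat κ))
    (Function.extend (fintypeEmbNat ι) (fun p => u i p) 0)
    (Function.extend (fintypeEmbNat ι) (fun p => u p j) 0)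
    (Function.extend (fintypeEmbNat κ) (fun p => v k p) 0)
    (Function.extend (fintypeEmbNat κ) (fun p => v p l) 0)
    (by simpa [extend_fintypeEmbNat] using hu.comul i j)
    (by simpa [extend_fintypeEmbNat] using hv.comul k l)
  simpa [extend_fintypeEmbNat] using this

lemma IsCopConvInv.matrix (hρt : IsCopConvInv ρ ρt) (hu : IsMultiplicativeMatrix R u)
    (hv : IsMultiplicativeMatrix R v) (i j : ι) (k l : κ) :
    (∑ p, ∑ r, ρt (u i p) (v r l) * ρ (u p j) (v k r) =
      (if i = j then 1 else 0) * (if k = l then 1 else 0)) ∧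
    (∑ p, ∑ r, ρ (u i p) (v r l) * ρt (u p j) (v k r) =
      (if i = j then 1 else 0) * (if k = l then 1 else 0)) := by
  have := hρt (u i j) (v k l) (Finset.univ.map (fintypeEmbNat ι))
    (Finset.univ.map (fintypeEmbNat κ))
    (Function.extend (fintypeEmbNat ι) (fun p => u i p) 0)
    (Function.extend (fintypeEmbNat ι) (fun p => u p j) 0)
    (Function.extend (fintypeEmbNat κ) (fun p => v k p) 0)
    (Function.extend (fintypeEmbNat κ) (fun p => v p l) 0)
    (by simpa [extend_fintypeEmbNat] using hu.comul i j)
    (by simpa [extend_fintypeEmbNat] using hv.comul k l)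
  simpa [extend_fintypeEmbNat, hu.counit, hv.counit] using this

lemma IsDQT.yang_baxter (hρ : IsDQT ρ) (hu : IsMultiplicativeMatrix R u)
    (hv : IsMultiplicativeMatrix R v) (hw : IsMultiplicativeMatrix R w)
    (i j : ι) (k l : κ) (m o : ν) :
    ∑ p, ∑ r, ∑ t, ρ (u p j) (v r l) * (ρ (v k r) (w m t) * ρ (u i p) (w t o)) =
      ∑ p, ∑ r, ∑ t, ρ (u i p) (v k r) * (ρ (u p j) (w m t) * ρ (v r l) (w t o)) := by
  have h := congrArg (fun a => ρ a (w m o)) (hρ.mul_comm hu hv i j k l)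
  simpa only [map_sum, LinearMap.sum_apply, map_smul, LinearMap.smul_apply, smul_eq_mul,
    hρ.mul_left _ _ hw, Finset.mul_sum] using h

/-- The R-matrix of two multiplicative matrices can be cancelled. -/
lemma IsCopConvInv.cancel (hρt : IsCopConvInv ρ ρt) (hu : IsMultiplicativeMatrix R u)
    (hv : IsMultiplicativeMatrix R v) {M : Type*} [AddCommGroup M] [Module R M]
    {f g : ι → κ → M}
    (h : ∀ j' k', ∑ j, ∑ k, ρ (u j j') (v k' k) • f j k =
      ∑ j, ∑ k, ρ (u j j') (v k' k) • g j k) (a : ι) (b : κ) :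
    f a b = g a b := by
  have key (f : ι → κ → M) : f a b = ∑ y : ι × κ, ρt (u y.1 a) (v b y.2) •
      ∑ x : ι × κ, ρ (u x.1 y.1) (v y.2 x.2) • f x.1 x.2 := by
    simp only [Finset.smul_sum, smul_smul]
    rw [Finset.sum_comm]
    simp only [← Finset.sum_smul]
    have (x : ι × κ) : ∑ y : ι × κ, ρt (u y.1 a) (v b y.2) * ρ (u x.1 y.1) (v y.2 x.2) =
        (if x.1 = a then 1 else 0) * (if b = x.2 then 1 else 0) := by
      rw [← (hρt.matrix hu hv x.1 a b x.2).2, Fintype.sum_prod_type]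
      simp only [mul_comm]
    simp [this, Fintype.sum_prod_type, ite_smul]
  rw [key f, key g]
  simp only [Fintype.sum_prod_type, h]

lemma CovChar.toLinear_matrix (h : CovChar ρ ρt cmul) (hu : IsMultiplicativeMatrix R u)
    (hv : IsMultiplicativeMatrix R v) (i j : ι) (k l : κ) :
    h.toLinear (u i j) (v k l) = ∑ p : ι × ι, ∑ s : κ × κ,
      (ρt (u p.2 j) (v k s.1) * ρ (u i p.1) (v s.1 s.2)) • (u p.1 p.2 * v s.2 l) :=
  h.eq_sum (hu.comul2 i j) (hv.comul2 k l)

/-- Matrix form of the covariantized product: `U₁ ⬝ R₁₂ ⬝ V₂ = R₁₂ U₁ V₂`. -/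
lemma CovChar.sum_toLinear (h : CovChar ρ ρt cmul) (hρt : IsCopConvInv ρ ρt)
    (hu : IsMultiplicativeMatrix R u) (hv : IsMultiplicativeMatrix R v)
    (i j : ι) (k l : κ) :
    ∑ p, ∑ r, ρ (u p j) (v k r) • h.toLinear (u i p) (v r l) =
      ∑ p, ∑ r, ρ (u i p) (v k r) • (u p j * v r l) := by
  trans ∑ y : (ι × ι) × (κ × κ), ∑ x : ι × κ, (ρ (u x.1 j) (v k x.2) *
      (ρt (u y.1.2 x.1) (v x.2 y.2.1) * ρ (u i y.1.1) (v y.2.1 y.2.2))) •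
        (u y.1.1 y.1.2 * v y.2.2 l)
  · simp only [h.toLinear_matrix hu hv, Finset.smul_sum, smul_smul, ← Fintype.sum_prod_type']
    exact Fintype.sum_equiv ⟨fun x => ⟨⟨x.2.2.1, x.2.2.2⟩, x.1, x.2.1⟩,
      fun x => ⟨x.2.1, x.2.2, x.1.1, x.1.2⟩, fun _ => rfl, fun _ => rfl⟩ _ _ fun _ => rfl
  have (y : (ι × ι) × (κ × κ)) :
      ∑ x : ι × κ, (ρ (u x.1 j) (v k x.2) * (ρt (u y.1.2 x.1) (v x.2 y.2.1) *
        ρ (u i y.1.1) (v y.2.1 y.2.2))) • (u y.1.1 y.1.2 * v y.2.2 l) =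
      ((if y.1.2 = j then 1 else 0) * (if k = y.2.1 then 1 else 0) *
        ρ (u i y.1.1) (v y.2.1 y.2.2)) • (u y.1.1 y.1.2 * v y.2.2 l) := by
    rw [← (hρt.matrix hu hv y.1.2 j k y.2.1).1, ← Finset.sum_smul, ← Fintype.sum_prod_type',
      Finset.sum_mul]
    congr 1
    exact Finset.sum_congr rfl fun _ _ => by ring
  simp only [this, Fintype.sum_prod_type]
  simp [ite_smul, ite_mul]

/-- The triple product `(U₁ ⬝ R₁₂ ⬝ V₂) ⬝ R₁₃ R₂₃ ⬝ W₃`. -/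
lemma CovChar.sum_toLinear_assoc_left (h : CovChar ρ ρt cmul) (hρ : IsDQT ρ)
    (hρt : IsCopConvInv ρ ρt) (hu : IsMultiplicativeMatrix R u)
    (hv : IsMultiplicativeMatrix R v) (hw : IsMultiplicativeMatrix R w)
    (i j' : ι) (k' l' : κ) (m' o : ν) :
    ∑ j₁, ∑ m₁, ρ (u j₁ j') (w m' m₁) • ∑ j, ∑ k, ρ (u j j₁) (v k' k) •
      ∑ l, ∑ m, ρ (v l l') (w m₁ m) •
        h.toLinear (h.toLinear (u i j) (v k l)) (w m o) =
    ∑ a, ∑ b, ∑ c, (∑ p, ∑ s, ∑ t, ρ (u i p) (v k' s) *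
      (ρ (u p a) (w m' t) * ρ (v s b) (w t c))) • (u a j' * (v b l' * w c o)) := by
  have inner (j₁ : ι) (m₁ : ν) : ∑ j, ∑ k, ρ (u j j₁) (v k' k) •
        ∑ l, ∑ m, ρ (v l l') (w m₁ m) •
          h.toLinear (h.toLinear (u i j) (v k l)) (w m o) =
      ∑ l, ∑ m, ρ (v l l') (w m₁ m) • ∑ p, ∑ s, ρ (u i p) (v k' s) •
        h.toLinear (u p j₁ * v s l) (w m o) := by
    have h1 (l : κ) (m : ν) := congrArg (fun a => h.toLinear a (w m o))
      (h.sum_toLinear hρt hu hv i j₁ k' l)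
    simp only [map_sum, LinearMap.sum_apply, map_smul, LinearMap.smul_apply] at h1
    simp only [← h1, Finset.smul_sum, smul_smul, ← Fintype.sum_prod_type']
    exact Fintype.sum_equiv ⟨fun x => ⟨x.2.2.1, x.2.2.2, x.1, x.2.1⟩,
      fun x => ⟨x.2.2.1, x.2.2.2, x.1, x.2.1⟩, fun _ => rfl, fun _ => rfl⟩ _ _
      fun _ => by simp only [Equiv.coe_fn_mk, mul_comm]
  have outer := fun p s => h.sum_toLinear hρt (hu.mul hv) hw (p, s) (j', l') m' o
  trans ∑ p, ∑ s, ρ (u i p) (v k' s) • ∑ x : ι × κ, ∑ m,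
      ρ (u x.1 j' * v x.2 l') (w m' m) • h.toLinear (u p x.1 * v s x.2) (w m o)
  · simp only [inner]
    simp only [hρ.mul_left _ _ hw, Finset.smul_sum, Finset.sum_smul, smul_smul,
      ← Fintype.sum_prod_type']
    exact Fintype.sum_equiv ⟨
      fun x => ⟨x.2.2.2.2.1, x.2.2.2.2.2, (x.1, x.2.2.1), x.2.2.2.1, x.2.1⟩,
      fun x => ⟨x.2.2.1.1, x.2.2.2.2, x.2.2.1.2, x.2.2.2.1, x.1, x.2.1⟩,
      fun _ => rfl, fun _ => rfl⟩ _ _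
      fun _ => by simp only [Equiv.coe_fn_mk]; congr 1; ring
  · simp only [outer]
    simp only [hρ.mul_left _ _ hw, Finset.smul_sum, Finset.sum_smul, smul_smul,
      ← Fintype.sum_prod_type']
    exact Fintype.sum_equiv ⟨
      fun x => ⟨x.2.2.1.1, x.2.2.1.2, x.2.2.2.1, x.1, x.2.1, x.2.2.2.2⟩,
      fun x => ⟨x.2.2.2.1, x.2.2.2.2.1, (x.1, x.2.1), x.2.2.1, x.2.2.2.2.2⟩,
      fun _ => rfl, fun _ => rfl⟩ _ _
      fun _ => by simp only [Equiv.coe_fn_mk, mul_assoc]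

/-- The triple product `U₁ ⬝ R₁₂ R₁₃ ⬝ (V₂ ⬝ R₂₃ ⬝ W₃)`. -/
lemma CovChar.sum_toLinear_assoc_right (h : CovChar ρ ρt cmul) (hρ : IsDQT ρ)
    (hρt : IsCopConvInv ρ ρt) (hu : IsMultiplicativeMatrix R u)
    (hv : IsMultiplicativeMatrix R v) (hw : IsMultiplicativeMatrix R w)
    (i j' : ι) (k' l' : κ) (m' o : ν) :
    ∑ j₁, ∑ m₁, ρ (u j₁ j') (w m' m₁) • ∑ j, ∑ k, ρ (u j j₁) (v k' k) •
      ∑ l, ∑ m, ρ (v l l') (w m₁ m) •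
        h.toLinear (u i j) (h.toLinear (v k l) (w m o)) =
    ∑ a, ∑ b, ∑ c, (∑ p, ∑ s, ∑ t, ρ (u i p) (v k' s) *
      (ρ (u p a) (w m' t) * ρ (v s b) (w t c))) • (u a j' * (v b l' * w c o)) := by
  have inner (j : ι) (k : κ) (m₁ : ν) := congrArg (h.toLinear (u i j))
    (h.sum_toLinear hρt hv hw k l' m₁ o)
  simp only [map_sum, map_smul] at inner
  have outer := fun r t => h.sum_toLinear hρt hu (hv.mul hw) i j' (r, t) (l', o)
  simp only [inner]
  trans ∑ j, ∑ e, ∑ f, (∑ j₁, ∑ k, ∑ m₁, ρ (u j j₁) (v k' k) *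
      (ρ (u j₁ j') (w m' m₁) * ρ (v k e) (w m₁ f))) • h.toLinear (u i j) (v e l' * w f o)
  · simp only [Finset.smul_sum, Finset.sum_smul, smul_smul, ← Fintype.sum_prod_type']
    exact Fintype.sum_equiv ⟨
      fun x => ⟨x.2.2.1, x.2.2.2.2.1, x.2.2.2.2.2, x.1, x.2.2.2.1, x.2.1⟩,
      fun x => ⟨x.2.2.2.1, x.2.2.2.2.2, x.1, x.2.2.2.2.1, x.2.1, x.2.2.1⟩,
      fun _ => rfl, fun _ => rfl⟩ _ _
      fun _ => by simp only [Equiv.coe_fn_mk]; congr 1; ring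
  simp only [← hρ.yang_baxter hu hv hw]
  trans ∑ r, ∑ t, ρ (v k' r) (w m' t) • ∑ j, ∑ x : κ × ν,
      ρ (u j j') (v r x.1 * w t x.2) • h.toLinear (u i j) (v x.1 l' * w x.2 o)
  · simp only [hρ.mul_right hu, Finset.smul_sum, Finset.sum_smul, smul_smul,
      ← Fintype.sum_prod_type']
    exact Fintype.sum_equiv ⟨
      fun x => ⟨x.2.2.2.2.1, x.2.2.2.2.2, x.1, (x.2.1, x.2.2.1), x.2.2.2.1⟩,
      fun x => ⟨x.2.2.1, x.2.2.2.1.1, x.2.2.2.1.2, x.2.2.2.2, x.1, x.2.1⟩,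
      fun _ => rfl, fun _ => rfl⟩ _ _
      fun _ => by simp only [Equiv.coe_fn_mk]; congr 1; ring
  · simp only [outer]
    simp only [hρ.mul_right hu, Finset.smul_sum, Finset.sum_smul, smul_smul,
      ← Fintype.sum_prod_type']
    exact Fintype.sum_equiv ⟨
      fun x => ⟨x.2.2.1, x.2.2.2.1.1, x.2.2.2.1.2, x.2.2.2.2, x.1, x.2.1⟩,
      fun x => ⟨x.2.2.2.2.1, x.2.2.2.2.2, x.1, (x.2.1, x.2.2.1), x.2.2.2.1⟩,
      fun _ => rfl, fun _ => rfl⟩ _ _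
      fun _ => by simp only [Equiv.coe_fn_mk]; congr 1; ring

lemma CovChar.toLinear_assoc_matrix (h : CovChar ρ ρt cmul) (hρ : IsDQT ρ)
    (hρt : IsCopConvInv ρ ρt) (hu : IsMultiplicativeMatrix R u)
    (hv : IsMultiplicativeMatrix R v) (hw : IsMultiplicativeMatrix R w)
    (i j : ι) (k l : κ) (m o : ν) :
    h.toLinear (h.toLinear (u i j) (v k l)) (w m o) =
      h.toLinear (u i j) (h.toLinear (v k l) (w m o)) := by
  refine hρt.cancel hv hw
    (f := fun l m => h.toLinear (h.toLinear (u i j) (v k l)) (w m o))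
    (g := fun l m => h.toLinear (u i j) (h.toLinear (v k l) (w m o)))
    (fun l' m₁ => ?_) l m
  refine hρt.cancel hu hv
    (f := fun j k => ∑ l, ∑ m, ρ (v l l') (w m₁ m) •
      h.toLinear (h.toLinear (u i j) (v k l)) (w m o))
    (g := fun j k => ∑ l, ∑ m, ρ (v l l') (w m₁ m) •
      h.toLinear (u i j) (h.toLinear (v k l) (w m o)))
    (fun j₁ k' => ?_) j k
  refine hρt.cancel hu hw
    (f := fun j₁ m₁ => ∑ j, ∑ k, ρ (u j j₁) (v k' k) • ∑ l, ∑ m, ρ (v l l') (w m₁ m) •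
      h.toLinear (h.toLinear (u i j) (v k l)) (w m o))
    (g := fun j₁ m₁ => ∑ j, ∑ k, ρ (u j j₁) (v k' k) • ∑ l, ∑ m, ρ (v l l') (w m₁ m) •
      h.toLinear (u i j) (h.toLinear (v k l) (w m o)))
    (fun j' m' => ?_) j₁ m₁
  rw [h.sum_toLinear_assoc_left hρ hρt hu hv hw, h.sum_toLinear_assoc_right hρ hρt hu hv hw]

/-- The span of all entries of multiplicative matrices. -/
def matrixEntrySpan (R A : Type u) [CommRing R] [Ring A] [Bialgebra R A] : Submodule R A :=
  Submodule.span R {a | ∃ (ι : Type) (_ : Fintype ι) (_ : DecidableEq ι) (u : ι → ι → A)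
    (i j : ι), IsMultiplicativeMatrix R u ∧ u i j = a}

lemma IsMultiplicativeMatrix.mem_span {ι : Type} [Fintype ι] [DecidableEq ι] {u : ι → ι → A}
    (hu : IsMultiplicativeMatrix R u) (i j : ι) : u i j ∈ matrixEntrySpan R A :=
  Submodule.subset_span ⟨ι, _, _, u, i, j, hu, rfl⟩

lemma CovChar.toLinear_mem_span (h : CovChar ρ ρt cmul) {a b : A}
    (ha : a ∈ matrixEntrySpan R A) (hb : b ∈ matrixEntrySpan R A) :
    h.toLinear a b ∈ matrixEntrySpan R A := by
  induction ha, hb using Submodule.span_induction₂ with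
  | mem_mem a b ha hb =>
    obtain ⟨ι, _, _, u, i, j, hu, rfl⟩ := ha
    obtain ⟨κ, _, _, v, k, l, hv, rfl⟩ := hb
    rw [h.toLinear_matrix hu hv]
    exact Submodule.sum_mem _ fun p _ => Submodule.sum_mem _ fun s _ =>
      Submodule.smul_mem _ _ ((hu.mul hv).mem_span (p.1, s.2) (p.2, l))
  | zero_left b hb => simp
  | zero_right a ha => simp
  | add_left a a' b _ _ _ h1 h2 => simpa using Submodule.add_mem _ h1 h2
  | add_right a b b' _ _ _ h1 h2 => simpa using Submodule.add_mem _ h1 h2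
  | smul_left c a b _ _ h1 => simpa using Submodule.smul_mem _ c h1
  | smul_right c a b _ _ h1 => simpa using Submodule.smul_mem _ c h1

lemma CovChar.toLinear_assoc (h : CovChar ρ ρt cmul) (hρ : IsDQT ρ)
    (hρt : IsCopConvInv ρ ρt) {a b c : A} (ha : a ∈ matrixEntrySpan R A)
    (hb : b ∈ matrixEntrySpan R A) (hc : c ∈ matrixEntrySpan R A) :
    h.toLinear (h.toLinear a b) c = h.toLinear a (h.toLinear b c) := by
  induction hc using Submodule.span_induction with
  | zero => simp
  | add c c' _ _ h1 h2 => simp [h1, h2]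
  | smul r c _ h1 => simp [h1]
  | mem c hc =>
    obtain ⟨ν, _, _, w, m, o, hw, rfl⟩ := hc
    induction ha, hb using Submodule.span_induction₂ with
    | mem_mem a b ha hb =>
      obtain ⟨ι, _, _, u, i, j, hu, rfl⟩ := ha
      obtain ⟨κ, _, _, v, k, l, hv, rfl⟩ := hb
      exact h.toLinear_assoc_matrix hρ hρt hu hv hw i j k l m o
    | zero_left b hb => simp
    | zero_right a ha => simp
    | add_left a a' b _ _ _ h1 h2 => simp [h1, h2]
    | add_right a b b' _ _ _ h1 h2 => simp [h1, h2]
    | smul_left r a b _ _ h1 => simp [h1]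
    | smul_right r a b _ _ h1 => simp [h1]

lemma CovChar.cchain_mem_span (h : CovChar ρ ρt cmul) (L : List A) {a : A}
    (ha : a ∈ matrixEntrySpan R A) (hL : ∀ b ∈ L, b ∈ matrixEntrySpan R A) :
    cchain cmul a L ∈ matrixEntrySpan R A := by
  induction L generalizing a with
  | nil => exact ha
  | cons b L ih =>
    simp only [List.mem_cons, forall_eq_or_imp] at hL
    exact h.toLinear_mem_span ha (ih hL.1 hL.2)

lemma CovChar.cchain_append_singleton (h : CovChar ρ ρt cmul) (hρ : IsDQT ρ)
    (hρt : IsCopConvInv ρ ρt) (L : List A) {a c : A}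
    (ha : a ∈ matrixEntrySpan R A) (hL : ∀ b ∈ L, b ∈ matrixEntrySpan R A)
    (hc : c ∈ matrixEntrySpan R A) :
    cchain cmul a (L ++ [c]) = h.toLinear (cchain cmul a L) c := by
  induction L generalizing a with
  | nil => rfl
  | cons b L ih =>
    simp only [List.mem_cons, forall_eq_or_imp] at hL
    simp only [List.cons_append, cchain, ih hL.1 hL.2, ← h.toLinear_apply]
    exact (h.toLinear_assoc hρ hρt ha (h.cchain_mem_span L hL.1 hL.2) hc).symm

end MatrixCoefficients

section Diagonal

variable {R : Type u} [CommRing R] {A : Type u} [Ring A] [Bialgebra R A]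
  {ρ ρt : A →ₗ[R] A →ₗ[R] R} {cmul : A → A → A} {n : ℕ} {qr : Rˣ} {x : Fin n → Fin n → A}

/-- `x^k_k` and `x^k_m` `q`-commute for `m < k`. -/
lemma OqMnRels.mul_diag {qq : Rˣ} (hx : OqMnRels n qq x) {k m : Fin n} (hm : m < k) :
    x k m * x k k = ((qq⁻¹ : Rˣ) : R) • (x k k * x k m) := by
  rw [hx.1 k m k hm, smul_smul, Units.inv_mul, one_smul]

/-- The coefficient of `x^k_m` in `(id ⊗ 𝓡(·, x^k_m)) Δ((x^k_k)^N)`, up to `(x^k_k)^(N-1)`. -/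
def diagCoeff (qr q : Rˣ) (N : ℕ) : R :=
  ((qr⁻¹ ^ N * q ^ N : Rˣ) : R) * (1 - qzpow q (-(2 * (N : ℤ))))

lemma diagCoeff_succ (qr q : Rˣ) (N : ℕ) :
    diagCoeff qr q (N + 1) = ((qr⁻¹ * q : Rˣ) : R) ^ N * (((qr⁻¹ : Rˣ) : R) * (q - (q⁻¹ : Rˣ))) +
      diagCoeff qr q N * ((qr⁻¹ : Rˣ) : R) * ((q⁻¹ : Rˣ) : R) := by
  have h (M : ℕ) : qzpow q (-(2 * (M : ℤ))) = ((q⁻¹ : Rˣ) : R) ^ M * ((q⁻¹ : Rˣ) : R) ^ M := by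
    rw [qzpow, zpow_neg, ← inv_zpow, two_mul, zpow_add, zpow_natCast]
    simp
  have hq : (q : R) * ((q⁻¹ : Rˣ) : R) = 1 := q.mul_inv
  simp only [diagCoeff, h, Units.val_mul, Units.val_pow_eq_pow_val, pow_succ, mul_pow]
  generalize ((q⁻¹ : Rˣ) : R) ^ N = b at *
  generalize (q : R) ^ N = a at *
  generalize ((q⁻¹ : Rˣ) : R) = d at *
  generalize (q : R) = c at *
  generalize ((qr⁻¹ : Rˣ) : R) ^ N = e at *
  generalize ((qr⁻¹ : Rˣ) : R) = f at *
  linear_combination (-e * f * b * b * a * d) * hq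

/-- `(x^k_k)^N` is an entry of a multiplicative matrix whose R-matrix row at `k` is explicit. -/
lemma exists_matrix_diag_pow (hx : OqMnRels n (qr ^ n) x) (hxm : IsMultiplicativeMatrix R x)
    (hρ : IsDQT ρ) (hρx : ∀ i j k l, ρ (x i j) (x k l) = RmatVal n qr i j k l)
    (k : Fin n) (N : ℕ) :
    ∃ (ι : Type) (_ : Fintype ι) (_ : DecidableEq ι) (u : ι → ι → A) (i j : ι),
      IsMultiplicativeMatrix R u ∧ u i j = x k k ^ N ∧
      (∀ m, ∑ p, ρ (u p j) (x k m) • u i p =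
        if m = k then ((qr⁻¹ * qr ^ n : Rˣ) : R) ^ N • x k k ^ N
        else if m < k then diagCoeff qr (qr ^ n) N • (x k k ^ (N - 1) * x k m) else 0) ∧
      (∀ s, ∑ p, ρ (u i p) (x k s) • u p j =
        if s = k then ((qr⁻¹ * qr ^ n : Rˣ) : R) ^ N • x k k ^ N else 0) := by
  induction N with
  | zero =>
    refine ⟨Unit, _, _, fun _ _ => 1, (), (), isMultiplicativeMatrix_one, by simp, ?_, ?_⟩ <;>
    · intro m
      simp only [hρ.2.2.2.1, hxm.counit]
      by_cases h : k = m <;> simp [h, eq_comm, diagCoeff, qzpow]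
  | succ N ih =>
    obtain ⟨ι, _, _, u, i, j, hu, hij, hF, hG⟩ := ih
    refine ⟨ι × Fin n, _, _, _, (i, k), (j, k), hu.mul hxm, by simp [hij, pow_succ], ?_, ?_⟩
    · intro m
      have e : ∑ p : ι × Fin n, ρ (u p.1 j * x p.2 k) (x k m) • (u i p.1 * x k p.2) =
          ∑ r, (∑ p, ρ (u p j) (x k r) • u i p) * ∑ p, ρ (x p k) (x r m) • x k p := by
        simp only [hρ.mul_left _ _ hxm, Finset.sum_smul, Finset.sum_mul_sum,
          smul_mul_smul_comm, ← Fintype.sum_prod_type']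
        exact Fintype.sum_equiv ⟨fun x => ⟨x.2, x.1.1, x.1.2⟩, fun x => ⟨⟨x.2.1, x.2.2⟩, x.1⟩,
          fun _ => rfl, fun _ => rfl⟩ _ _ fun _ => rfl
      have e2 (r : Fin n) : ∑ p, ρ (x p k) (x r m) • x k p =
          if r = k then (if m = k then ((qr⁻¹ * qr ^ n : Rˣ) : R) • x k k else
            if m < k then (((qr⁻¹ : Rˣ) : R) * (((qr ^ n : Rˣ) : R) - (((qr ^ n)⁻¹ : Rˣ) : R))) •
              x k m else 0)
          else if r = m then ((qr⁻¹ : Rˣ) : R) • x k k else 0 := by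
        simp only [hρx, RmatVal, mul_add, add_smul, Finset.sum_add_distrib]
        by_cases hr : r = k
        · subst hr
          by_cases hm : m = r
          · subst hm
            simp [ite_smul]
          · by_cases hmr : m < r <;> simp [hm, hmr, Ne.symm hm, ite_smul]
        · by_cases hm : r = m
          · subst hm
            simp [hr, Ne.symm hr, ite_smul]
          · simp [hr, hm]
      simp only [e, e2, hF]
      by_cases hm : m = k
      · subst hm
        have (r : Fin n) (Y : A) : (if r = m then Y else if r = m then
            ((qr⁻¹ : Rˣ) : R) • x m m else 0) = if r = m then Y else 0 := by split_ifs <;> rfl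
        simp only [this, if_true, mul_ite, mul_zero, Finset.sum_ite_eq', Finset.mem_univ,
          smul_mul_smul_comm, ← pow_succ]
      · have (r : Fin n) (Y Z : A) : (if r = k then Y else if r = m then Z else 0) =
            (if r = k then Y else 0) + if r = m then Z else 0 := by
          by_cases hr : r = k
          · subst hr
            simp [Ne.symm hm]
          · simp [hr]
        simp only [this, mul_add, Finset.sum_add_distrib, mul_ite, mul_zero, Finset.sum_ite_eq',
          Finset.mem_univ, if_true, if_neg hm]
        by_cases hmk : m < k
        · simp only [if_pos hmk, Nat.add_sub_cancel, diagCoeff_succ]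
          rcases N with _ | N
          · simp [diagCoeff, qzpow]
          · have hc : x k k ^ N * x k m * x k k =
                (((qr ^ n)⁻¹ : Rˣ) : R) • (x k k ^ (N + 1) * x k m) := by
              rw [mul_assoc, hx.mul_diag hmk, mul_smul_comm, ← mul_assoc, ← pow_succ]
            simp only [Nat.add_sub_cancel, smul_mul_assoc, mul_smul_comm, hc]
            module
        · simp [hmk]
    · intro s
      have e : ∑ p : ι × Fin n, ρ (u i p.1 * x k p.2) (x k s) • (u p.1 j * x p.2 k) =
          ∑ r, (∑ p, ρ (u i p) (x k r) • u p j) * ∑ p, ρ (x k p) (x r s) • x p k := by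
        simp only [hρ.mul_left _ _ hxm, Finset.sum_smul, Finset.sum_mul_sum,
          smul_mul_smul_comm, ← Fintype.sum_prod_type']
        exact Fintype.sum_equiv ⟨fun x => ⟨x.2, x.1.1, x.1.2⟩, fun x => ⟨⟨x.2.1, x.2.2⟩, x.1⟩,
          fun _ => rfl, fun _ => rfl⟩ _ _ fun _ => rfl
      have e2 : ∑ p, ρ (x k p) (x k s) • x p k =
          if s = k then ((qr⁻¹ * qr ^ n : Rˣ) : R) • x k k else 0 := by
        rw [Finset.sum_eq_single k (fun p _ hp => by simp [hρx, RmatVal, Ne.symm hp])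
          (by simp)]
        by_cases hs : s = k
        · subst hs
          simp [hρx, RmatVal]
        · simp [hρx, RmatVal, hs, Ne.symm hs]
      simp only [e, hG, ite_mul, zero_mul, Finset.sum_ite_eq', Finset.mem_univ, if_true, e2]
      split_ifs with h
      · rw [smul_mul_smul_comm, pow_succ, pow_succ]
      · simp

/-- The recursion expressing `(x^k_k)^(N+1) x^k_l` through covariantized products. -/
lemma diag_pow_succ_mul (hx : OqMnRels n (qr ^ n) x) (hxm : IsMultiplicativeMatrix R x)
    (hρ : IsDQT ρ) (hρx : ∀ i j k l, ρ (x i j) (x k l) = RmatVal n qr i j k l)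
    (hρt : IsCopConvInv ρ ρt) (h : CovChar ρ ρt cmul) (N : ℕ) (k l : Fin n) :
    x k k ^ (N + 1) * x k l = h.toLinear (x k k ^ (N + 1)) (x k l) +
      (1 - qzpow (qr ^ n) (-(2 * ((N + 1 : ℕ) : ℤ)))) •
        ∑ m with m < k, h.toLinear (x k k ^ N * x k m) (x m l) := by
  obtain ⟨ι, _, _, u, i, j, hu, hij, hF, hG⟩ := exists_matrix_diag_pow hx hxm hρ hρx k (N + 1)
  have key : ∑ m, h.toLinear (∑ p, ρ (u p j) (x k m) • u i p) (x m l) =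
      ∑ s, (∑ p, ρ (u i p) (x k s) • u p j) * x s l := by
    have := h.sum_toLinear hρt hu hxm i j k l
    simp only [map_sum, LinearMap.sum_apply, map_smul, LinearMap.smul_apply, Finset.sum_mul,
      smul_mul_assoc]
    rw [Finset.sum_comm, this, Finset.sum_comm]
  have split (m : Fin n) (Y Z : A) : (if m = k then Y else if m < k then Z else 0) =
      (if m = k then Y else 0) + if m < k then Z else 0 := by
    by_cases hm : m = k
    · subst hm
      simp
    · simp [hm]
  simp only [hF, hG, split, map_add, LinearMap.add_apply, Finset.sum_add_distrib, ite_mul,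
    zero_mul, Finset.sum_ite_eq', Finset.mem_univ, if_true, Nat.add_sub_cancel,
    apply_ite h.toLinear, map_zero, LinearMap.zero_apply, map_smul,
    LinearMap.smul_apply, smul_mul_assoc, DFunLike.ite_apply] at key
  have hθ : IsUnit (((qr⁻¹ * qr ^ n : Rˣ) : R) ^ (N + 1)) := (Units.isUnit _).pow _
  refine hθ.smul_left_cancel.1 ?_
  rw [← key, smul_add, ← Finset.sum_filter, ← Finset.smul_sum, smul_smul, diagCoeff]
  simp only [mul_pow, Units.val_mul, Units.val_pow_eq_pow_val]

/-- The sum over paths `k = β₀, β₁, …, β_i, l` with `β_j < k` of the covariantized products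
of the corresponding generators, multiplied on the left by `y`. -/
def pathSum (cmul : A → A → A) (x : Fin n → Fin n → A) (k : Fin n) (i : ℕ) (y : A)
    (l : Fin n) : A :=
  ∑ β ∈ Finset.univ.filter (fun β : Fin (i + 1) → Fin n =>
      β 0 = k ∧ ∀ j : Fin (i + 1), j ≠ 0 → β j < k),
    cListProd cmul 1
      (y :: (((List.finRange i).map (fun m => x (β m.castSucc) (β m.succ))) ++
          [x (β (Fin.last i)) l]))

lemma pathSum_zero (h : CovChar ρ ρt cmul) (k : Fin n) (y : A) (l : Fin n) :
    pathSum cmul x k 0 y l = h.toLinear y (x k l) := by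
  have : (Finset.univ.filter (fun β : Fin (0 + 1) → Fin n =>
      β 0 = k ∧ ∀ j : Fin (0 + 1), j ≠ 0 → β j < k)) = {fun _ => k} := by
    ext β
    simp only [Finset.mem_filter, Finset.mem_univ, true_and, Finset.mem_singleton]
    constructor
    · rintro ⟨h0, -⟩
      funext j
      rw [Fin.fin_one_eq_zero j, ← h0]
    · rintro rfl
      exact ⟨rfl, fun j hj => absurd (Fin.fin_one_eq_zero j) hj⟩
  rw [pathSum, this, Finset.sum_singleton]
  rfl

lemma pathSum_succ (hxm : IsMultiplicativeMatrix R x) (hρ : IsDQT ρ)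
    (hρt : IsCopConvInv ρ ρt) (h : CovChar ρ ρt cmul) (k : Fin n) (i : ℕ) {y : A}
    (hy : y ∈ matrixEntrySpan R A) (l : Fin n) :
    pathSum cmul x k (i + 1) y l =
      ∑ m with m < k, h.toLinear (pathSum cmul x k i y m) (x m l) := by
  simp only [pathSum, map_sum, LinearMap.sum_apply]
  rw [← Finset.sum_product']
  refine Finset.sum_nbij' (fun β => (β (Fin.last _), Fin.init β))
    (fun p => Fin.snoc (α := fun _ => Fin n) p.2 p.1) ?_ ?_ ?_ ?_ ?_
  · intro β hβ
    simp only [Finset.mem_filter, Finset.mem_univ, true_and, Finset.mem_product] at hβ ⊢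
    exact ⟨hβ.2 _ (Fin.last_pos.ne'), hβ.1, fun j hj => hβ.2 _ (by simpa using hj)⟩
  · rintro ⟨m, β⟩ hβ
    simp only [Finset.mem_filter, Finset.mem_univ, true_and, Finset.mem_product] at hβ ⊢
    obtain ⟨hm, h0, hβ⟩ := hβ
    refine ⟨by rw [← Fin.castSucc_zero, Fin.snoc_castSucc, h0], fun j hj => ?_⟩
    induction j using Fin.lastCases with
    | last => simpa using hm
    | cast j => simpa using hβ j (by simpa using hj)
  · intro β _
    simp
  · rintro ⟨m, β⟩ _
    simp
  · intro β _
    have hmem : ∀ b ∈ (List.finRange (i + 1)).map (fun m => x (β m.castSucc) (β m.succ)),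
        b ∈ matrixEntrySpan R A := by
      intro b hb
      obtain ⟨m, -, rfl⟩ := List.mem_map.1 hb
      exact hxm.mem_span _ _
    simp only [cListProd]
    rw [h.cchain_append_singleton hρ hρt _ hy hmem (hxm.mem_span _ _), List.finRange_succ_last]
    simp [Fin.init, Function.comp_def]

lemma diag_pow_mul_eq_sum_pathSum (hx : OqMnRels n (qr ^ n) x)
    (hxm : IsMultiplicativeMatrix R x) (hρ : IsDQT ρ)
    (hρx : ∀ i j k l, ρ (x i j) (x k l) = RmatVal n qr i j k l)
    (hρt : IsCopConvInv ρ ρt) (h : CovChar ρ ρt cmul) (N : ℕ) (k l : Fin n) :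
    x k k ^ N * x k l = ∑ i ∈ Finset.range (N + 1),
      (∏ j ∈ Finset.Icc 1 i, (1 - qzpow (qr ^ n) (-(2 * ((N : ℤ) + 1 - (j : ℤ)))))) •
        pathSum cmul x k i (x k k ^ (N - i)) l := by
  have hpow (M : ℕ) : x k k ^ M ∈ matrixEntrySpan R A := by
    obtain ⟨ι, _, _, u, i, j, hu, hij, -⟩ := exists_matrix_diag_pow hx hxm hρ hρx k M
    exact hij ▸ hu.mem_span i j
  induction N generalizing l with
  | zero =>
    have h1 := pathSum_zero (x := x) h k 1 l
    have key := h.sum_toLinear hρt isMultiplicativeMatrix_one hxm () () k l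
    simp [hρ.2.2.2.1, hxm.counit, ite_smul] at key
    simp [h1, key]
  | succ N ih =>
    rw [Finset.sum_range_succ', diag_pow_succ_mul hx hxm hρ hρx hρt h, add_comm]
    congr 1
    · simp only [pathSum_succ hxm hρ hρt h _ _ (hpow _), ih, map_sum, LinearMap.sum_apply,
        map_smul, LinearMap.smul_apply]
      rw [Finset.sum_comm, Finset.smul_sum]
      refine Finset.sum_congr rfl fun i _ => ?_
      rw [← Finset.smul_sum, smul_smul, Nat.add_sub_add_right]
      congr 1
      simp only [← Finset.Ico_add_one_right_eq_Icc, Finset.prod_Ico_eq_prod_range,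
        Nat.add_sub_cancel]
      rw [Finset.prod_range_succ', mul_comm]
      congr 1
      · refine Finset.prod_congr rfl fun j _ => ?_
        congr 3
        push_cast
        ring
      · congr 3
        push_cast
        ring
    · simp [pathSum_zero h]

end Diagonal

/-- In the common underlying module of `O_q(M_n)` and `B_q(M_n)`, for `N ≥ 1`,
`(x^k_k)^N x^k_l = ∑_{i=0}^{N} ∑_β (∏_{j=1}^{i} (1 − q^{−2(N+1−j)}))
  ((x^k_k)^{N−i}) ⬝ x^{β₁}_{β₂} ⬝ ⋯ ⬝ x^{β_i}_{β_{i+1}} ⬝ x^{β_{i+1}}_l`,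
the inner sum being over tuples `β = (β₁, …, β_{i+1})` with `β₁ = k` and `β_j < k`
for `1 < j ≤ i + 1` (recorded `0`-indexed below). -/
theorem diag_power_mul_expansion
    {R : Type u} [CommRing R] (n : ℕ) (hn : 2 ≤ n) (qr : Rˣ)
    {A : Type u} [Ring A] [Bialgebra R A] (x : Fin n → Fin n → A)
    (hx : OqMnRels n (qr ^ n) x)
    (hxuniv : ∀ (B : Type u) [Ring B] [Algebra R B] (y : Fin n → Fin n → B),
      OqMnRels n (qr ^ n) y → ∃! f : A →ₐ[R] B, ∀ i j, f (x i j) = y i j)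
    (hΔ : ∀ i j, Coalgebra.comul (R := R) (x i j) = ∑ k, x i k ⊗ₜ[R] x k j)
    (hε : ∀ i j, Coalgebra.counit (R := R) (x i j) = if i = j then (1 : R) else 0)
    (ρ : A →ₗ[R] A →ₗ[R] R) (hρ : IsDQT ρ)
    (hρx : ∀ i j k l, ρ (x i j) (x k l) = RmatVal n qr i j k l)
    (ρt : A →ₗ[R] A →ₗ[R] R) (hρt : IsCopConvInv ρ ρt)
    (cmul : A → A → A) (hcmul : CovChar ρ ρt cmul)
    (N : ℕ) (hN : 1 ≤ N) (k l : Fin n) :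
    x k k ^ N * x k l =
      ∑ i ∈ Finset.range (N + 1),
        ∑ β ∈ Finset.univ.filter (fun β : Fin (i + 1) → Fin n =>
            β 0 = k ∧ ∀ j : Fin (i + 1), j ≠ 0 → β j < k),
          (∏ j ∈ Finset.Icc 1 i,
              (1 - qzpow (qr ^ n) (-(2 * ((N : ℤ) + 1 - (j : ℤ)))))) •
            cListProd cmul 1
              ((x k k ^ (N - i)) ::
                (((List.finRange i).map (fun m => x (β m.castSucc) (β m.succ))) ++
                  [x (β (Fin.last i)) l])) := by
  simp only [← Finset.smul_sum]
  exact diag_pow_mul_eq_sum_pathSum hx ⟨hΔ, hε⟩ hρ hρx hρt hcmul N k l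

end
end
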